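/- arXiv:2409.18420 — 2 statements merged into one kernel-verified Lean document; each statement's English description precedes it below -/
import Mathlib

section
/- Fix n, M ≥ 1 with M < 4^n/2 + 2, and d = 2^n. Let |C⟩ be a vector in P_C ⊗ P_T ⊗ (⊗_{i=1}^M I_i ⊗ O_i) ⊗ I′_1 ⊗ O′_1 ⊗ F_C ⊗ F_T (all n-qubit factors ≅ ℂ^d; P_C, F_C ≅ ℂ²). Suppose that for every (M+1)-tuple of n-qubit unitary operators (U_1,…,U_M,V_1) there exist complex numbers ξ_{k1}(U_1,…,U_M,V_1), k = 1,…,M, with |C⟩ ∗ (|U_1⟩⟩^{I_1 O_1} ⊗ ⋯ ⊗ |U_M⟩⟩^{I_M O_M} ⊗ |V_1⟩⟩^{I′_1 O′_1}) = Σ_{k=1}^M ξ_{k1} |S_SWITCH⟩ ∗ (|U_k⟩⟩^{I_k O_k} ⊗ |V_1⟩⟩^{I′_1 O′_1}). Then there exist complex-valued functions ξ̃_{k1}(U_1,…,U_M,V_1) satisfying the same equation for all tuples of n-qubit unitaries and such that, for each k: (1) ξ̃_{k1} does not depend on U_k or on V_1, and (2) ξ̃_{k1} is the restriction to unitary arguments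 of a function that is multilinear in the matrices (U_i)_{i≠k}. -/
/-!
Write `A_U(V)` and `B_U(V)` for the two diagonal blocks (control `0` and `1`) of
`|C⟩ ∗ (|U_1⟩⟩ ⊗ ⋯ ⊗ |U_M⟩⟩ ⊗ |V⟩⟩)`. They are multilinear in all arguments, and the hypothesis says
that on unitaries `A_U(V) = V S` and `B_U(V) = S V` with a common `S = ∑ ξ_k U_k`.

*Independence of `V`.* Fix unitary `U`. The relation `A(V) V = V B(V)` is quadratic in `V`, and a
quadratic form vanishing on the unitary group vanishes everywhere
(`quadratic_zero_of_unitary`), so the relation holds for all matrices. Polarizing at the identity,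
`D(V) = A(V) - V A(1)` commutes with `V`, hence `D(V) = c V + f(V) 1` with a linear form `f`
(`commuting_linear`, Brešar's theorem on commuting maps). Because `V* A(V)` stays in the proper
subspace spanned by the `U_k`, which contains a unitary, `f` and `c` vanish
(`eq_mul_of_one_mem`, `eq_mul_of_unitary_mem`). Therefore `A_U(V) = V X(U)` with `X(U) = A_U(1)`,
and `∑ ξ_k U_k = X(U)` whichever coefficients were chosen.

*Multilinear coefficients.* `X` is multilinear and `X(U) ∈ span(U_1, …, U_M)` for unitary tuples.
The wedge product `X(U) ∧ U_1 ∧ ⋯ ∧ U_M` is quadratic in each `U_i`, so it vanishes for all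
matrices and the membership extends to all linearly independent tuples (`mem_span_of_unitary`). It
remains to see that a multilinear map `X : E^M → E` with `M < dim E` and `X(u) ∈ span(u)` for
independent `u` has the form `∑ L_k((u_i)_{i ≠ k}) u_k` with multilinear `L_k`
(`exists_multilinear_coeffs`). The membership first extends to all `u` (`mem_span_of_indep`).
For fixed `(u_i)_{i ≠ k}` with span `T`, the map induced by `X` on `E ⧸ T` has every vector as an
eigenvector, so it is a scalar; this scalar is `L_k`, and it is multilinear since it can be read off
from a single vector outside a subspace of dimension at most `M`.

The bound `2 M < 4 ^ n + 4` enters only through its consequence `M < 4 ^ n`.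
-/

/-- Index of `ℂ^d` with `d = 2^n`. -/
abbrev Dix (n : ℕ) := Fin (2 ^ n)
/-- Index of a slot `I ⊗ O` (two copies of `ℂ^{2^n}`). -/
abbrev Sl (n : ℕ) := Dix n × Dix n
/-- Index of `P = P_C ⊗ P_T` (resp. `F = F_C ⊗ F_T`): `ℂ² ⊗ ℂ^{2^n}`. -/
abbrev PFix (n : ℕ) := Fin 2 × Dix n

/-- Choi vector `|A⟩⟩ = Σ_i e_i ⊗ A e_i`: component at `(i, j)` is `A j i`. -/
noncomputable def choiV {n : ℕ} (A : Matrix (Dix n) (Dix n) ℂ) : Sl n → ℂ :=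
  fun x => A x.2 x.1

/-- Component of the switch Choi vector `|S_SWITCH⟩` at `P`-index `p`, `(I,O)`-index `io`,
`(I′,O′)`-index `jo` and `F`-index `f`:
`|S⟩ = |0⟩|0⟩|1⟩⟩^{P_T I}|1⟩⟩^{O I′}|1⟩⟩^{O′ F_T} + |1⟩|1⟩|1⟩⟩^{P_T I′}|1⟩⟩^{O′ I}|1⟩⟩^{O F_T}`. -/
noncomputable def swVec {n : ℕ} (p : PFix n) (io jo : Sl n) (f : PFix n) : ℂ :=
  (if p.1 = 0 ∧ f.1 = 0 ∧ p.2 = io.1 ∧ io.2 = jo.1 ∧ jo.2 = f.2 then 1 else 0) +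
  (if p.1 = 1 ∧ f.1 = 1 ∧ p.2 = jo.1 ∧ jo.2 = io.1 ∧ io.2 = f.2 then 1 else 0)

/-- The contraction `|S_SWITCH⟩ ∗ (|U⟩⟩ ⊗ |V⟩⟩)`, a vector on `P ⊗ F`. -/
noncomputable def swLink {n : ℕ} (U V : Matrix (Dix n) (Dix n) ℂ) : PFix n × PFix n → ℂ :=
  fun pf => ∑ io : Sl n, ∑ jo : Sl n, swVec pf.1 io jo pf.2 * choiV U io * choiV V jo

/-- The contraction `|C⟩ ∗ (|U_1⟩⟩ ⊗ ⋯ ⊗ |U_M⟩⟩ ⊗ |V⟩⟩)` of a vector on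
`P ⊗ (⊗_{i=1}^M I_i ⊗ O_i) ⊗ I′_1 ⊗ O′_1 ⊗ F`, a vector on `P ⊗ F`. -/
noncomputable def linkC {n M : ℕ} (C : PFix n × (Fin M → Sl n) × Sl n × PFix n → ℂ)
    (U : Fin M → Matrix (Dix n) (Dix n) ℂ) (V : Matrix (Dix n) (Dix n) ℂ) :
    PFix n × PFix n → ℂ :=
  fun pf => ∑ s : Fin M → Sl n, ∑ t : Sl n,
    C (pf.1, s, t, pf.2) * (∏ i, choiV (U i) (s i)) * choiV V t

open Matrix

/-! ### Quadratic forms on the unitary group -/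

section
variable {ι : Type*} [Fintype ι] [DecidableEq ι]

lemma quad_zero {a b c : ℂ} (h1 : a + b + c = 0) (h2 : a - b + c = 0)
    (h3 : a + b * Complex.I - c = 0) : a = 0 ∧ b = 0 ∧ c = 0 := by
  have hb : b = 0 := by linear_combination (h1 - h2) / 2
  subst hb
  refine ⟨by linear_combination (h1 + h3) / 2, rfl, by linear_combination (h1 - h3) / 2⟩

/-- The diagonal of a bilinear form along a line is a polynomial of degree at most two, so three
zeros suffice. Here they lie on the unit circle. -/
lemma bilin_diag_zero {E : Type*} [AddCommGroup E] [Module ℂ E] (Q : E →ₗ[ℂ] E →ₗ[ℂ] ℂ) (x y : E)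
    (h : ∀ w ∈ ({1, -1, Complex.I} : Set ℂ), Q (x + w • y) (x + w • y) = 0) (w : ℂ) :
    Q (x + w • y) (x + w • y) = 0 := by
  have e : ∀ w : ℂ, Q (x + w • y) (x + w • y) =
      Q x x + w * (Q x y + Q y x) + w ^ 2 * Q y y := by
    intro w; simp; ring
  have h1 := h 1 (by simp)
  have h2 := h (-1) (by simp)
  have h3 := h Complex.I (by simp)
  rw [e] at h1 h2 h3 ⊢
  rw [Complex.I_sq] at h3
  obtain ⟨ha, hb, hc⟩ := quad_zero (a := Q x x) (b := Q x y + Q y x) (c := Q y y)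
    (by linear_combination h1) (by linear_combination h2) (by linear_combination h3)
  rw [ha, hb, hc]; ring

/-- As in `bilin_diag_zero`, with three real zeros. -/
lemma bilin_diag_zero' {E : Type*} [AddCommGroup E] [Module ℂ E] (Q : E →ₗ[ℂ] E →ₗ[ℂ] ℂ) (x y : E)
    (h : ∀ w ∈ ({0, 1, -1} : Set ℂ), Q (x + w • y) (x + w • y) = 0) (w : ℂ) :
    Q (x + w • y) (x + w • y) = 0 := by
  have e : ∀ w : ℂ, Q (x + w • y) (x + w • y) =
      Q x x + w * (Q x y + Q y x) + w ^ 2 * Q y y := by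
    intro w; simp; ring
  have h1 := h 1 (by simp)
  have h2 := h (-1) (by simp)
  have h3 := h 0 (by simp)
  rw [e] at h1 h2 h3 ⊢
  have hb : Q x y + Q y x = 0 := by linear_combination (h1 - h2) / 2
  have hc : Q y y = 0 := by linear_combination (h1 + h2) / 2 - h3
  have ha : Q x x = 0 := by linear_combination h3
  rw [ha, hb, hc]; ring

lemma diag_mem_unitary (z : ι → ℂ) (hz : ∀ i, ‖z i‖ = 1) :
    diagonal z ∈ unitaryGroup ι ℂ := by
  rw [mem_unitaryGroup_iff, star_eq_conjTranspose, diagonal_conjTranspose, diagonal_mul_diagonal]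
  rw [← diagonal_one]
  congr 1
  funext i
  simp [Complex.mul_conj, Complex.normSq_eq_norm_sq, hz]

/-- The unimodular diagonal entries can be replaced by arbitrary complex numbers one at a time. -/
lemma zero_of_diag (Q : Matrix ι ι ℂ →ₗ[ℂ] Matrix ι ι ℂ →ₗ[ℂ] ℂ)
    (h : ∀ u ∈ unitaryGroup ι ℂ, Q u u = 0) (s : Finset ι) :
    ∀ z : ι → ℂ, (∀ i ∉ s, ‖z i‖ = 1) → Q (diagonal z) (diagonal z) = 0 := by
  induction s using Finset.induction_on with
  | empty => exact fun z hz => h _ (diag_mem_unitary z fun i => hz i (by simp))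
  | insert i s hi ih =>
    intro z hz
    have e : ∀ w : ℂ, diagonal (Function.update z i w) =
        diagonal (Function.update z i 0) + w • diagonal (Pi.single i (1 : ℂ)) := by
      intro w
      rw [← diagonal_smul, diagonal_add]
      congr 1
      funext j
      by_cases hj : j = i
      · subst hj; simp
      · simp [hj]
    have := bilin_diag_zero Q (diagonal (Function.update z i 0)) (diagonal (Pi.single i (1 : ℂ)))
      (by
        intro w hw
        rw [← e]
        apply ih
        intro j hj
        by_cases hji : j = i
        · subst hji
          simp only [Function.update_self]
          rcases hw with rfl | rfl | rfl <;> simp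
        · rw [Function.update_of_ne hji]
          exact hz j (by simp [hji, hj])) (z i)
    rwa [← e, Function.update_eq_self] at this

/-- A quadratic form on matrices that vanishes on the unitary group is zero. It vanishes on
unimodular diagonal matrices in any orthonormal basis, hence on all diagonal ones, in particular on
Hermitian matrices; and `H₁ + w H₂` with `H₁, H₂` Hermitian and `w` real is Hermitian, so the
value at `w = i` vanishes as well. -/
lemma quadratic_zero_of_unitary (Q : Matrix ι ι ℂ →ₗ[ℂ] Matrix ι ι ℂ →ₗ[ℂ] ℂ)
    (h : ∀ u ∈ unitaryGroup ι ℂ, Q u u = 0) (A : Matrix ι ι ℂ) : Q A A = 0 := by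
  have herm : ∀ H : Matrix ι ι ℂ, H.IsHermitian → Q H H = 0 := by
    intro H hH
    set W : Matrix ι ι ℂ := (hH.eigenvectorUnitary : Matrix ι ι ℂ) with hW
    have hWu : W ∈ unitaryGroup ι ℂ := hH.eigenvectorUnitary.2
    let c : Matrix ι ι ℂ →ₗ[ℂ] Matrix ι ι ℂ :=
      LinearMap.mulLeft ℂ W ∘ₗ LinearMap.mulRight ℂ (star W)
    have hz := zero_of_diag (Q.compl₁₂ c c) (by
      intro u hu
      apply h
      exact mul_mem hWu (mul_mem hu (Unitary.star_mem hWu))) Finset.univ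
      (RCLike.ofReal ∘ hH.eigenvalues) (by simp)
    have e : H = c (diagonal (RCLike.ofReal ∘ hH.eigenvalues)) := by
      conv_lhs => rw [hH.spectral_theorem]
      simp [c, W, Unitary.conjStarAlgAut_apply, mul_assoc]
    rw [e]; exact hz
  have hd := realPart_add_I_smul_imaginaryPart A
  rw [← hd]
  apply bilin_diag_zero'
  intro w hw
  apply herm
  have h1 : IsSelfAdjoint (realPart A : Matrix ι ι ℂ) := (realPart A).2
  have h2 : IsSelfAdjoint (imaginaryPart A : Matrix ι ι ℂ) := (imaginaryPart A).2
  have hw' : IsSelfAdjoint w := by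
    rcases hw with rfl | rfl | rfl <;> simp [IsSelfAdjoint]
  exact h1.add (hw'.smul h2)

lemma quadratic_zero_of_unitary' (Q : Matrix ι ι ℂ →ₗ[ℂ] Matrix ι ι ℂ →ₗ[ℂ] Matrix ι ι ℂ)
    (h : ∀ u ∈ unitaryGroup ι ℂ, Q u u = 0) (A : Matrix ι ι ℂ) : Q A A = 0 := by
  ext i j
  exact quadratic_zero_of_unitary (Q.compr₂ (entryLinearMap ℂ ℂ i j))
    (fun u hu => by simp [h u hu]) A

/-! ### Linear maps commuting with their argument -/

/-- Brešar's theorem for matrices: a linear map `D` such that `D x` commutes with `x` for all `x` is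
of the form `x ↦ c x + f(x) 1`. By polarization `Δ(x, u) = [D x, u] = [x, D u]` is a derivation in
each argument, which forces `Δ(x, u) z [y, v] = [x, u] z Δ(y, v)`. Taking matrix units for `y`, `v`
gives `Δ(x, u) = c [x, u]`, so `D x - c x` is central. -/
lemma commuting_linear [Nontrivial ι] (D : Matrix ι ι ℂ →ₗ[ℂ] Matrix ι ι ℂ)
    (hD : ∀ x, D x * x = x * D x) :
    ∃ (c : ℂ) (f : Matrix ι ι ℂ →ₗ[ℂ] ℂ), ∀ x, D x = c • x + f x • (1 : Matrix ι ι ℂ) := by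
  let Δ : Matrix ι ι ℂ → Matrix ι ι ℂ → Matrix ι ι ℂ := fun x u => D x * u - u * D x
  have hΔ : ∀ x u, Δ x u = x * D u - D u * x := by
    intro x u
    have := hD (x + u)
    simp only [map_add, add_mul, mul_add, hD x, hD u] at this
    simp only [Δ]
    have h2 : D x * u + D u * x = x * D u + u * D x := by
      have h3 := congrArg (fun m => m - x * D x - u * D u) this
      calc _ = x * D x + D u * x + (D x * u + u * D u) - x * D x - u * D u := by abel
        _ = _ := h3
        _ = _ := by abel
    rw [sub_eq_sub_iff_add_eq_add, h2]
  have hr : ∀ x u v, Δ x (u * v) = Δ x u * v + u * Δ x v := by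
    intro x u v; simp only [Δ]; noncomm_ring
  have hl : ∀ x y u, Δ (x * y) u = Δ x u * y + x * Δ y u := by
    intro x y u; simp only [hΔ]; noncomm_ring
  -- compare the two expansions of `Δ (x * y) (u * v)`
  have h1 : ∀ x u y v, Δ x u * (y * v - v * y) = (x * u - u * x) * Δ y v := by
    intro x u y v
    have a1 := hl x y (u * v)
    have a2 := hr (x * y) u v
    rw [a1, hr, hr, hl, hl] at a2
    have h3 := sub_eq_zero.mpr a2
    rw [← sub_eq_zero, ← neg_eq_zero, ← h3]
    noncomm_ring
  -- substitute `z * y` for `y`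
  have h2 : ∀ x u z y v, Δ x u * z * (y * v - v * y) = (x * u - u * x) * z * Δ y v := by
    intro x u z y v
    have a1 := h1 x u (z * y) v
    have a2 := h1 x u z v
    rw [hl] at a1
    have e : z * y * v - v * (z * y) = z * (y * v - v * y) + (z * v - v * z) * y := by
      noncomm_ring
    rw [e, mul_add, mul_add, ← mul_assoc (Δ x u) _ y, a2, ← mul_assoc, ← mul_assoc, ← mul_assoc,
      add_comm] at a1
    exact add_left_cancel a1
  obtain ⟨p, q, hpq⟩ := exists_pair_ne ι
  set D0 := Δ (single p q 1) (single q p 1) with hD0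
  have h3 : ∀ x u, Δ x u = D0 p p • (x * u - u * x) := by
    intro x u
    have key : ∀ j, Δ x u * single j j 1 = D0 p p • ((x * u - u * x) * single j j 1) := by
      intro j
      have := congrArg (fun m => m * single p j (1 : ℂ)) (h2 x u (single j p 1) (single p q 1) (single q p 1))
      simp only [← hD0, mul_assoc] at this
      have e1 : single j p (1:ℂ) * ((single p q 1 * single q p 1 - single q p 1 * single p q 1) *
          single p j 1) = single j j 1 := by
        simp [sub_mul, hpq.symm]
      have e2 : single j p (1:ℂ) * (D0 * single p j 1) = D0 p p • single j j 1 := by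
        rw [← mul_assoc, single_mul_mul_single]
        simp
      rw [e1, e2] at this
      rw [this, mul_smul_comm]
    have hs : ∑ j, single j j (1:ℂ) = (1 : Matrix ι ι ℂ) := by
      exact sum_single_one
    calc Δ x u = Δ x u * ∑ j, single j j 1 := by rw [hs, mul_one]
      _ = D0 p p • ((x * u - u * x) * ∑ j, single j j 1) := by
        rw [Finset.mul_sum, Finset.mul_sum, Finset.smul_sum]
        exact Finset.sum_congr rfl fun j _ => key j
      _ = _ := by rw [hs, mul_one]
  refine ⟨D0 p p, entryLinearMap ℂ ℂ p p ∘ₗ (D - D0 p p • LinearMap.id), fun x => ?_⟩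
  have hc : ∀ u, Commute u (D x - D0 p p • x) := by
    intro u
    have := h3 x u
    simp only [Δ, smul_sub] at this
    rw [commute_iff_eq, mul_sub, sub_mul, smul_mul_assoc, mul_smul_comm]
    rw [sub_eq_sub_iff_add_eq_add] at this ⊢
    rw [add_comm, ← this, add_comm]
  obtain ⟨r, hr⟩ := mem_range_scalar_of_commute_single (M := D x - D0 p p • x)
    (fun i j _ => hc _)
  have hx : D x - D0 p p • x = r • (1 : Matrix ι ι ℂ) := by
    rw [← hr]; simp [smul_one_eq_diagonal]
  have : (entryLinearMap ℂ ℂ p p ∘ₗ (D - D0 p p • LinearMap.id)) x = r := by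
    simp only [LinearMap.comp_apply, LinearMap.sub_apply, LinearMap.smul_apply, LinearMap.id_apply, hx]
    simp
  rw [this, ← hx]; abel

/-- If `V* A(V)` lies in a proper subspace `S ∋ 1` and `A(V) V = V B(V)` for all unitary `V`, then
`A` is right multiplication by `A(1)`. -/
lemma eq_mul_of_one_mem [Nontrivial ι] (S : Submodule ℂ (Matrix ι ι ℂ)) (hS : S ≠ ⊤) (h1 : 1 ∈ S)
    (A B : Matrix ι ι ℂ →ₗ[ℂ] Matrix ι ι ℂ)
    (hA : ∀ V ∈ unitaryGroup ι ℂ, star V * A V ∈ S)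
    (hAB : ∀ V ∈ unitaryGroup ι ℂ, A V * V = V * B V) (V : Matrix ι ι ℂ) : A V = V * A 1 := by
  have hA1 : A 1 ∈ S := by simpa using hA 1 (one_mem _)
  have hAB' : ∀ V, A V * V = V * B V := by
    intro V
    have := quadratic_zero_of_unitary'
      (((LinearMap.mul ℂ (Matrix ι ι ℂ)).compl₁₂ A LinearMap.id) -
        ((LinearMap.mul ℂ (Matrix ι ι ℂ)).compl₁₂ LinearMap.id B))
      (fun u hu => by simp [hAB u hu]) V
    simpa [sub_eq_zero] using this
  -- polarization at the identity
  have hB1 : B 1 = A 1 := by simpa using (hAB' 1).symm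
  have hB : ∀ V, B V = A V + A 1 * V - V * A 1 := by
    intro V
    have h := hAB' (V + 1)
    simp only [map_add, add_mul, mul_add, mul_one, one_mul, hAB' V, hB1] at h
    rw [eq_sub_iff_add_eq]
    have h' := congrArg (fun m => m - V * B V - A 1) h
    calc B V + V * A 1 = V * B V + V * A 1 + (B V + A 1) - V * B V - A 1 := by abel
      _ = V * B V + B V + (V * A 1 + A 1) - V * B V - A 1 := by abel
      _ = _ := by rw [← h']; abel
  let D : Matrix ι ι ℂ →ₗ[ℂ] Matrix ι ι ℂ := A - LinearMap.mulRight ℂ (A 1)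
  have hDx : ∀ x, D x = A x - x * A 1 := fun x => rfl
  have hD : ∀ x, D x * x = x * D x := by
    intro x
    have h := hAB' x
    rw [hB] at h
    rw [hDx, sub_mul, h]
    noncomm_ring
  obtain ⟨c, f, hcf⟩ := commuting_linear D hD
  -- `f(V) V* ∈ S` for unitary `V`, so the product of `f` with the linear form
  -- `V ↦ conj (φ (V*))` vanishes on unitaries, where `φ ≠ 0` annihilates `S`
  obtain ⟨φ, hφ0, hφ⟩ := Submodule.exists_le_ker_of_lt_top S hS.lt_top
  let g : Matrix ι ι ℂ →ₗ[ℂ] ℂ :=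
    { toFun := fun V => star (φ (star V))
      map_add' := by intro x y; simp
      map_smul' := by intro r x; simp }
  have hfg : ∀ x, f x * g x = 0 := by
    intro x
    refine quadratic_zero_of_unitary ((LinearMap.mul ℂ ℂ).compl₁₂ f g) (fun u hu => ?_) x
    have hu' : star u * u = 1 := mem_unitaryGroup_iff'.mp hu
    have e : f u • star u = star u * A u - A 1 - c • 1 := by
      have h := congrArg (fun m => star u * m) (hcf u)
      simp only [hDx, mul_sub, mul_add, mul_smul_comm, mul_one, ← mul_assoc, hu', one_mul] at h
      rw [h]; abel
    have hm : f u • star u ∈ S := by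
      rw [e]
      exact S.sub_mem (S.sub_mem (hA u hu) hA1) (S.smul_mem _ h1)
    have h0 : f u * φ (star u) = 0 := by simpa using hφ hm
    rcases mul_eq_zero.mp h0 with h | h <;> simp [g, h]
  have hg0 : ∃ b, g b ≠ 0 := by
    by_contra! hg
    apply hφ0
    ext1 x
    have := hg (star x)
    simpa [g] using this
  obtain ⟨b, hb⟩ := hg0
  have hfb : f b = 0 := (mul_eq_zero.mp (hfg b)).resolve_right hb
  have hf : ∀ x, f x = 0 := by
    intro x
    by_contra hx
    have hgx : g x = 0 := (mul_eq_zero.mp (hfg x)).resolve_left hx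
    have := hfg (x + b)
    rw [map_add, map_add, hfb, hgx, add_zero, zero_add] at this
    exact (mul_ne_zero hx hb) this
  have hc : c = 0 := by
    have h := hcf 1
    rw [hDx, hf, one_mul, sub_self, zero_smul, add_zero] at h
    exact (smul_eq_zero.mp h.symm).resolve_right one_ne_zero
  have := hcf V
  rw [hDx, hf, hc] at this
  simpa [sub_eq_zero] using this

/-- The same conclusion when `S` contains some unitary `U`: apply `eq_mul_of_one_mem` to the subspace
`S U*` and the maps `W ↦ U A(U* W) U*` and `W ↦ B(U* W)`. -/
lemma eq_mul_of_unitary_mem [Nontrivial ι] (S : Submodule ℂ (Matrix ι ι ℂ)) (hS : S ≠ ⊤)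
    (U : Matrix ι ι ℂ) (hU : U ∈ unitaryGroup ι ℂ) (hUS : U ∈ S)
    (A B : Matrix ι ι ℂ →ₗ[ℂ] Matrix ι ι ℂ)
    (hA : ∀ V ∈ unitaryGroup ι ℂ, star V * A V ∈ S)
    (hAB : ∀ V ∈ unitaryGroup ι ℂ, A V * V = V * B V) (V : Matrix ι ι ℂ) : A V = V * A 1 := by
  have hU1 : U * star U = 1 := mem_unitaryGroup_iff.mp hU
  have hU2 : star U * U = 1 := mem_unitaryGroup_iff'.mp hU
  let L := LinearMap.mulLeft ℂ (star U)
  have key := eq_mul_of_one_mem (S.comap (LinearMap.mulRight ℂ U)) (by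
      intro h
      apply hS
      rw [Submodule.eq_top_iff'] at h ⊢
      intro x
      have := h (x * star U)
      simpa [mul_assoc, hU2] using this) (by simpa using hUS)
    (LinearMap.mulLeft ℂ U ∘ₗ LinearMap.mulRight ℂ (star U) ∘ₗ A ∘ₗ L)
    (B ∘ₗ L) (by
      intro W hW
      have := hA (star U * W) (mul_mem (Unitary.star_mem hU) hW)
      simpa [L, mul_assoc, hU2] using this) (by
      intro W hW
      have := hAB (star U * W) (mul_mem (Unitary.star_mem hU) hW)
      have := congrArg (fun m => U * m) this
      simp only [← mul_assoc, hU1, one_mul] at this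
      simpa [L, mul_assoc] using this)
  have k1 := key (U * V)
  have k2 := key U
  simp only [L, LinearMap.comp_apply, LinearMap.mulLeft_apply, LinearMap.mulRight_apply,
    ← mul_assoc, hU2, one_mul] at k1 k2
  have e1 := congrArg (fun m => star U * m * U) k1
  have e2 := congrArg (fun m => star U * m * U) k2
  simp only [mul_assoc, hU2, mul_one] at e1 e2
  simp only [← mul_assoc, hU2, one_mul] at e1 e2
  rw [e1, e2]
  simp only [mul_assoc]
end

/-! ### Multilinear maps with values in the span of their arguments -/

section
variable {K E F : Type*} [Field K] [AddCommGroup E] [Module K E] [FiniteDimensional K E]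
  [AddCommGroup F] [Module K F] {κ : Type*} [Fintype κ] [DecidableEq κ]

omit [FiniteDimensional K E] [DecidableEq κ] in
lemma exists_notMem_span_range (v : κ → E) (h : Fintype.card κ < Module.finrank K E) :
    ∃ w, w ∉ Submodule.span K (Set.range v) := by
  by_contra! hw
  have h1 : Submodule.span K (Set.range v) = ⊤ := Submodule.eq_top_iff'.mpr hw
  have h2 := finrank_range_le_card (R := K) v
  rw [Set.finrank, h1, finrank_top] at h2
  omega

omit [FiniteDimensional K E] in
/-- A multilinear map in at most `dim E` vectors that vanishes on linearly independent families is
zero. The families are freed one slot at a time: an arbitrary vector in the slot is the difference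
of two vectors that are independent of the slots not yet freed. -/
lemma multilinear_eq_zero (Y : MultilinearMap K (fun _ : κ => E) F)
    (hcard : Fintype.card κ ≤ Module.finrank K E)
    (h : ∀ u : κ → E, LinearIndependent K u → Y u = 0) (u : κ → E) : Y u = 0 := by
  suffices H : ∀ t : Finset κ, ∀ u : κ → E, LinearIndepOn K u (↑t : Set κ)ᶜ → Y u = 0 from
    H Finset.univ u (by simp)
  intro t
  induction t using Finset.induction_on with
  | empty => exact fun u hu => h u (by simpa using hu)
  | insert i t hi ih =>
    intro u hu
    have hfresh : ∀ w, w ∉ Submodule.span K (u '' (↑(insert i t) : Set κ)ᶜ) →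
        Y (Function.update u i w) = 0 := by
      intro w hw
      apply ih
      have hs : (↑t : Set κ)ᶜ = insert i (↑(insert i t) : Set κ)ᶜ := by
        ext j
        by_cases hj : j = i
        · subst hj; simp [hi]
        · simp [hj]
      have hagree : Set.EqOn (Function.update u i w) u (↑(insert i t) : Set κ)ᶜ := by
        intro j hj
        apply Function.update_of_ne
        rintro rfl
        simp at hj
      rw [hs, linearIndepOn_insert (by simp)]
      refine ⟨hu.congr hagree.symm, ?_⟩
      rw [hagree.image_eq, Function.update_self]
      exact hw
    have hex : ∃ w, w ∉ Submodule.span K (u '' (↑(insert i t) : Set κ)ᶜ) := by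
      have := exists_notMem_span_range (K := K)
        (fun j : {j // j ∈ (insert i t)ᶜ} => u j) (by
          rw [Fintype.card_coe, Finset.card_compl]
          have : 0 < Fintype.card κ := Fintype.card_pos_iff.mpr ⟨i⟩
          have : 0 < (insert i t).card := Finset.card_pos.mpr ⟨i, by simp⟩
          omega)
      obtain ⟨w, hw⟩ := this
      refine ⟨w, fun h => hw ?_⟩
      convert h using 2
      ext x
      simp
    by_cases hui : u i ∈ Submodule.span K (u '' (↑(insert i t) : Set κ)ᶜ)
    · obtain ⟨w, hw⟩ := hex
      have h1 := hfresh w hw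
      have h2 := hfresh (u i + w) (fun hc => hw ((Submodule.add_mem_iff_right _ hui).mp hc))
      rw [Y.map_update_add, h1, add_zero, Function.update_eq_self] at h2
      exact h2
    · have := hfresh _ hui
      rwa [Function.update_eq_self] at this

/-- If `X u ∉ span u`, a hyperplane contains all `u i` but not `X u`. It still has dimension at least
the number of slots, and on it `X` takes independent families into the hyperplane, so
`multilinear_eq_zero` applies to the composite of `X` with the defining form. -/
lemma mem_span_of_indep (X : MultilinearMap K (fun _ : κ => E) E)
    (hcard : Fintype.card κ < Module.finrank K E)
    (h : ∀ u : κ → E, LinearIndependent K u → X u ∈ Submodule.span K (Set.range u))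
    (u : κ → E) : X u ∈ Submodule.span K (Set.range u) := by
  by_contra hu
  obtain ⟨φ, hφ, hker⟩ := Submodule.exists_le_ker_of_notMem hu
  have hφ0 : φ ≠ 0 := by rintro rfl; simp at hφ
  have hdim : Fintype.card κ ≤ Module.finrank K (LinearMap.ker φ) := by
    have := Module.Dual.finrank_ker_add_one_of_ne_zero hφ0
    omega
  have := multilinear_eq_zero
    ((φ.compMultilinearMap X).compLinearMap (fun _ => (LinearMap.ker φ).subtype)) hdim
    (by
      intro v hv
      have hv' : LinearIndependent K (fun i => (v i : E)) :=
        hv.map' (LinearMap.ker φ).subtype (Submodule.ker_subtype _)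
      have hle : Submodule.span K (Set.range fun i => (v i : E)) ≤ LinearMap.ker φ := by
        rw [Submodule.span_le]
        rintro _ ⟨i, rfl⟩
        exact (v i).2
      exact hle (h _ hv'))
    (fun i => ⟨u i, hker (Submodule.subset_span ⟨i, rfl⟩)⟩)
  exact hφ this

/-- The family `v` indexed by `i ≠ k`, completed by `x` at the index `k`. -/
def insertAt (k : κ) (v : {i : κ // i ≠ k} → E) (x : E) : κ → E :=
  fun i => if h : i = k then x else v ⟨i, h⟩

omit [AddCommGroup E] [Fintype κ] in
lemma range_insertAt (k : κ) (v : {i : κ // i ≠ k} → E) (x : E) :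
    Set.range (insertAt k v x) = insert x (Set.range v) := by
  ext y
  constructor
  · rintro ⟨i, rfl⟩
    by_cases h : i = k
    · simp [insertAt, h]
    · right; exact ⟨⟨i, h⟩, by simp [insertAt, h]⟩
  · rintro (rfl | ⟨i, rfl⟩)
    · exact ⟨k, by simp [insertAt]⟩
    · exact ⟨i, by simp [insertAt, i.2]⟩

omit [AddCommGroup E] [Fintype κ] in
lemma update_insertAt (k : κ) (v : {i : κ // i ≠ k} → E) (x y : E) :
    Function.update (insertAt k v x) k y = insertAt k v y := by
  ext i
  by_cases h : i = k
  · subst h; simp [insertAt]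
  · simp [insertAt, h]

omit [AddCommGroup E] [Fintype κ] in
lemma insertAt_update (k : κ) [DecidableEq {i : κ // i ≠ k}] (v : {i : κ // i ≠ k} → E) (i : {i : κ // i ≠ k}) (x y : E) :
    insertAt k (Function.update v i y) x = Function.update (insertAt k v x) i y := by
  ext j
  by_cases h : j = k
  · subst h
    rw [Function.update_of_ne i.2.symm]; simp [insertAt]
  · by_cases hji : j = i
    · subst hji; simp [insertAt, h]
    · rw [Function.update_of_ne hji]
      simp only [insertAt, h, dite_false]
      rw [Function.update_of_ne]
      intro hc; exact hji (congrArg Subtype.val hc)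

omit [AddCommGroup E] [Fintype κ] in
lemma insertAt_restrict (k : κ) (u : κ → E) :
    insertAt k (fun i : {i : κ // i ≠ k} => u i) (u k) = u := by
  ext i
  by_cases h : i = k
  · subst h; simp [insertAt]
  · simp [insertAt, h]

omit [Fintype κ] in
/-- Modulo the span `T` of the other vectors, `X` acts on the slot `k` as a scalar: the map induced on
`E ⧸ T` is well defined and has every vector as an eigenvector. -/
lemma exists_coeff_at (X : MultilinearMap K (fun _ : κ => E) E)
    (hX : ∀ u, X u ∈ Submodule.span K (Set.range u)) (k : κ) (v : {i : κ // i ≠ k} → E) :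
    ∃ c : K, ∀ x, X (insertAt k v x) - c • x ∈ Submodule.span K (Set.range v) := by
  set T := Submodule.span K (Set.range v) with hT
  have hXx : ∀ x, ∃ a : K, X (insertAt k v x) - a • x ∈ T := by
    intro x
    have := hX (insertAt k v x)
    rw [range_insertAt, Submodule.mem_span_insert] at this
    obtain ⟨a, z, hz, e⟩ := this
    exact ⟨a, by rw [e]; simpa using hz⟩
  let f : E →ₗ[K] E := X.toLinearMap (insertAt k v 0) k
  have hf : ∀ x, f x = X (insertAt k v x) := by
    intro x; simp [f, update_insertAt]
  have hker : T ≤ LinearMap.ker (T.mkQ ∘ₗ f) := by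
    intro x hx
    obtain ⟨a, ha⟩ := hXx x
    rw [LinearMap.mem_ker, LinearMap.comp_apply, hf, Submodule.mkQ_apply,
      Submodule.Quotient.mk_eq_zero]
    have := T.add_mem ha (T.smul_mem a hx)
    simpa using this
  obtain ⟨c, hc⟩ := LinearMap.exists_eq_smul_id_of_forall_notLinearIndependent
    (f := T.liftQ (T.mkQ ∘ₗ f) hker) (by
      intro y hy
      obtain ⟨x, rfl⟩ := Submodule.Quotient.mk_surjective T y
      obtain ⟨a, ha⟩ := hXx x
      rw [LinearIndependent.pair_iff] at hy
      have := (hy (-a) 1 (by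
        rw [Submodule.liftQ_apply, LinearMap.comp_apply, hf, Submodule.mkQ_apply,
          ← Submodule.Quotient.mk_smul, ← Submodule.Quotient.mk_smul,
          ← Submodule.Quotient.mk_add, Submodule.Quotient.mk_eq_zero]
        rw [one_smul, neg_smul, neg_add_eq_sub]
        exact ha)).2
      exact one_ne_zero this)
  refine ⟨c, fun x => ?_⟩
  have := congrArg (fun g => g (Submodule.Quotient.mk x)) hc
  simp only [Submodule.liftQ_apply, LinearMap.comp_apply, hf, Submodule.mkQ_apply,
    LinearMap.smul_apply, Module.End.one_apply] at this
  rwa [← Submodule.Quotient.mk_smul, Submodule.Quotient.eq] at this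

/-- The scalars of `exists_coeff_at` depend multilinearly on the remaining vectors. -/
lemma exists_coeff (X : MultilinearMap K (fun _ : κ => E) E)
    (hcard : Fintype.card κ < Module.finrank K E)
    (hX : ∀ u, X u ∈ Submodule.span K (Set.range u)) (k : κ) :
    ∃ L : MultilinearMap K (fun _ : {i : κ // i ≠ k} => E) K, ∀ v x,
      X (insertAt k v x) - L v • x ∈ Submodule.span K (Set.range v) := by
  choose c hc using exists_coeff_at X hX k
  have hk : 0 < Fintype.card κ := Fintype.card_pos_iff.mpr ⟨k⟩
  have hcard' : Fintype.card {i : κ // i ≠ k} + 1 = Fintype.card κ := by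
    rw [Fintype.card_subtype_compl, Fintype.card_subtype_eq]; omega
  refine ⟨⟨c, ?_, ?_⟩, hc⟩
  · intro inst v i x y
    -- a vector outside the span of all the vectors that occur isolates the coefficients
    obtain ⟨z, hz⟩ := exists_notMem_span_range (K := K)
      (fun j : Option {i : κ // i ≠ k} => j.elim y (Function.update v i x)) (by
        rw [Fintype.card_option]; omega)
    set T := Submodule.span K
      (Set.range (fun j : Option {i : κ // i ≠ k} => j.elim y (Function.update v i x))) with hT
    have hy : y ∈ T := Submodule.subset_span ⟨none, rfl⟩
    have hvx : ∀ j, Function.update v i x j ∈ T := fun j => Submodule.subset_span ⟨some j, rfl⟩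
    have hx : x ∈ T := by simpa using hvx i
    have hle : ∀ w ∈ T, Submodule.span K (Set.range (Function.update v i w)) ≤ T := by
      intro w hw
      rw [Submodule.span_le]
      rintro _ ⟨j, rfl⟩
      by_cases hj : j = i
      · subst hj; simpa using hw
      · have := hvx j
        rw [Function.update_of_ne hj] at this ⊢
        exact this
    have h1 := hle _ (T.add_mem hx hy) (hc (Function.update v i (x + y)) z)
    have h2 := hle _ hx (hc (Function.update v i x) z)
    have h3 := hle _ hy (hc (Function.update v i y) z)
    rw [insertAt_update] at h1 h2 h3
    rw [X.map_update_add] at h1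
    have h4 := T.sub_mem h1 (T.add_mem h2 h3)
    by_contra hne
    apply hz
    replace hne := sub_ne_zero.mpr hne
    rw [← T.smul_mem_iff hne, ← T.neg_mem_iff]
    convert h4 using 1
    module
  · intro inst v i r x
    obtain ⟨z, hz⟩ := exists_notMem_span_range (K := K) (Function.update v i x) (by omega)
    set T := Submodule.span K (Set.range (Function.update v i x)) with hT
    have hvx : ∀ j, Function.update v i x j ∈ T := fun j => Submodule.subset_span ⟨j, rfl⟩
    have hx : x ∈ T := by simpa using hvx i
    have hle : Submodule.span K (Set.range (Function.update v i (r • x))) ≤ T := by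
      rw [Submodule.span_le]
      rintro _ ⟨j, rfl⟩
      by_cases hj : j = i
      · subst hj; simpa using T.smul_mem r hx
      · have := hvx j
        rw [Function.update_of_ne hj] at this ⊢
        exact this
    have h1 := hle (hc (Function.update v i (r • x)) z)
    have h2 := hc (Function.update v i x) z
    rw [insertAt_update] at h1 h2
    rw [X.map_update_smul] at h1
    have h4 := T.sub_mem h1 (T.smul_mem r h2)
    by_contra hne
    apply hz
    replace hne := sub_ne_zero.mpr hne
    rw [← T.smul_mem_iff hne, ← T.neg_mem_iff]
    convert h4 using 1
    simp only [smul_eq_mul]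
    module

/-- The multilinear map `u ↦ L (u_i)_{i ≠ k} • u_k`. -/
def coeffTerm (k : κ) (L : MultilinearMap K (fun _ : {i : κ // i ≠ k} => E) K) :
    MultilinearMap K (fun _ : κ => E) E where
  toFun u := L (fun i => u i) • u k
  map_update_add' := by
    intro inst u i x y
    by_cases h : i = k
    · subst h
      have : ∀ z, (fun j : {j : κ // j ≠ i} => Function.update u i z j) = fun j : {j : κ // j ≠ i} => u j := by
        intro z; ext j; exact Function.update_of_ne j.2 _ _
      simp only [this, Function.update_self, smul_add]
    · have : ∀ z, (fun j : {j : κ // j ≠ k} => Function.update u i z j) =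
          Function.update (fun j : {j : κ // j ≠ k} => u j) ⟨i, h⟩ z := by
        intro z
        ext j
        simp [Function.update_apply, Subtype.ext_iff]
      simp only [this, Function.update_of_ne (Ne.symm h), L.map_update_add, add_smul]
  map_update_smul' := by
    intro inst u i r x
    by_cases h : i = k
    · subst h
      have : ∀ z, (fun j : {j : κ // j ≠ i} => Function.update u i z j) = fun j : {j : κ // j ≠ i} => u j := by
        intro z; ext j; exact Function.update_of_ne j.2 _ _
      simp only [this, Function.update_self, smul_comm r]
    · have : ∀ z, (fun j : {j : κ // j ≠ k} => Function.update u i z j) =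
          Function.update (fun j : {j : κ // j ≠ k} => u j) ⟨i, h⟩ z := by
        intro z
        ext j
        simp [Function.update_apply, Subtype.ext_iff]
      simp only [this, Function.update_of_ne (Ne.symm h), L.map_update_smul, smul_assoc]

/-- A multilinear map in fewer than `dim E` vectors of `E`, with values in the span of its arguments on
independent families, is a combination of its arguments with multilinear coefficients. -/
theorem exists_multilinear_coeffs (X : MultilinearMap K (fun _ : κ => E) E)
    (hcard : Fintype.card κ < Module.finrank K E)
    (hX : ∀ u, LinearIndependent K u → X u ∈ Submodule.span K (Set.range u)) :
    ∃ L : ∀ k : κ, MultilinearMap K (fun _ : {i : κ // i ≠ k} => E) K,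
      ∀ u, X u = ∑ k, L k (fun i => u i) • u k := by
  have hX' := mem_span_of_indep X hcard hX
  choose L hL using exists_coeff X hcard hX'
  refine ⟨L, fun u => ?_⟩
  have := multilinear_eq_zero (X - ∑ k, coeffTerm k (L k)) hcard.le (by
    intro u hu
    obtain ⟨a, ha⟩ := (Submodule.mem_span_range_iff_exists_fun K).mp (hX u hu)
    have hak : ∀ k, a k = L k (fun i => u i) := by
      intro k
      have h1 := hL k (fun i => u i) (u k)
      rw [insertAt_restrict, ← ha] at h1
      have hr : Set.range (fun i : {i : κ // i ≠ k} => u i) = u '' (Set.univ \ {k}) := by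
        ext x; simp
      rw [hr] at h1
      have h2 : ∑ i ∈ Finset.univ.erase k, a i • u i ∈
          Submodule.span K (u '' (Set.univ \ {k})) :=
        Submodule.sum_mem _ fun i hi => Submodule.smul_mem _ _
          (Submodule.subset_span ⟨i, by simpa using hi, rfl⟩)
      rw [← Finset.add_sum_erase _ _ (Finset.mem_univ k)] at h1
      have h3 := Submodule.sub_mem _ h1 h2
      have h4 : (a k - L k (fun i => u i)) • u k ∈ Submodule.span K (u '' (Set.univ \ {k})) := by
        convert h3 using 1
        module
      exact sub_eq_zero.mp ((linearIndependent_iff_eq_zero_of_smul_mem_span.mp hu) k _ h4)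
    simp [coeffTerm, ← hak, ha]) u
  simpa [coeffTerm, _root_.sum_apply, sub_eq_zero] using this
end

/-! ### From unitary tuples to independent tuples -/

section
variable {ι : Type*} [Fintype ι] [DecidableEq ι]

/-- For every alternating form `ω`, the function `ω(X(u), u_1, …, u_M)` is quadratic in each `u_i`
and vanishes on unitary tuples, hence on all tuples. -/
lemma mem_span_of_unitary {M : ℕ}
    (X : MultilinearMap ℂ (fun _ : Fin M => Matrix ι ι ℂ) (Matrix ι ι ℂ))
    (hX : ∀ u, (∀ i, u i ∈ unitaryGroup ι ℂ) → X u ∈ Submodule.span ℂ (Set.range u))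
    (u : Fin M → Matrix ι ι ℂ) (hu : LinearIndependent ℂ u) :
    X u ∈ Submodule.span ℂ (Set.range u) := by
  have key : ∀ ω : Matrix ι ι ℂ [⋀^Fin (M + 1)]→ₗ[ℂ] ℂ, ∀ s : Finset (Fin M),
      ∀ u : Fin M → Matrix ι ι ℂ, (∀ i ∉ s, u i ∈ unitaryGroup ι ℂ) →
        ω (Fin.cons (X u) u : Fin (M + 1) → Matrix ι ι ℂ) = 0 := by
    intro ω s
    induction s using Finset.induction_on with
    | empty =>
      intro u hu
      apply ω.map_linearDependent
      rw [linearIndependent_finCons]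
      exact fun h => h.2 (hX u fun i => hu i (by simp))
    | insert i s hi ih =>
      intro u hu
      let Q : Matrix ι ι ℂ →ₗ[ℂ] Matrix ι ι ℂ →ₗ[ℂ] ℂ := LinearMap.mk₂ ℂ
        (fun a b => ω (Fin.cons (X (Function.update u i a)) (Function.update u i b) :
          Fin (M + 1) → Matrix ι ι ℂ))
        (fun a a' b => by
          rw [X.map_update_add]
          exact ω.toMultilinearMap.cons_add _ _ _)
        (fun c a b => by
          rw [X.map_update_smul]
          exact ω.toMultilinearMap.cons_smul _ _ _)
        (fun a b b' => by
          simp only [Fin.cons_update]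
          exact ω.map_update_add _ _ _ _)
        (fun c a b => by
          simp only [Fin.cons_update]
          exact ω.map_update_smul _ _ _ _)
      have := quadratic_zero_of_unitary Q (fun a ha => ih (Function.update u i a) (by
        intro j hj
        by_cases hji : j = i
        · subst hji; simpa using ha
        · rw [Function.update_of_ne hji]
          exact hu j (by simp [hji, hj]))) (u i)
      simp only [Q, LinearMap.mk₂_apply, Function.update_eq_self] at this
      exact this
  by_contra hmem
  have hind : LinearIndependent ℂ (Fin.cons (X u) u : Fin (M + 1) → Matrix ι ι ℂ) :=
    linearIndependent_finCons.mpr ⟨hu, hmem⟩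
  obtain ⟨g, hg⟩ := LinearMap.exists_leftInverse_of_injective
    (Fintype.linearCombination ℂ (Fin.cons (X u) u : Fin (M + 1) → Matrix ι ι ℂ))
    (LinearMap.ker_eq_bot.mpr (hind.fintypeLinearCombination_injective))
  -- `g` sends the family to the standard basis, so this form would take the value `1` on it
  have h0 := key (detRowAlternating.compLinearMap g) Finset.univ u (by simp)
  have hgi : (fun i => g ((Fin.cons (X u) u : Fin (M + 1) → Matrix ι ι ℂ) i)) =
      (1 : Matrix (Fin (M + 1)) (Fin (M + 1)) ℂ) := by
    funext i
    have := LinearMap.congr_fun hg (Pi.single i 1)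
    simp only [LinearMap.comp_apply, Fintype.linearCombination_apply_single, one_smul,
      LinearMap.id_apply] at this
    rw [this]
    ext j
    simp [Pi.single_apply, one_apply, eq_comm]
  have h1 : det (fun i => g ((Fin.cons (X u) u : Fin (M + 1) → Matrix ι ι ℂ) i)) = 0 := h0
  rw [hgi, det_one] at h1
  exact one_ne_zero h1
end

/-! ### The blocks of the contracted vector -/

section
variable {n M : ℕ}

/-- The switch applied to `U` and `V` has blocks `V U` and `U V` on the control diagonal and zero blocks
off it. -/
lemma swLink_apply (U V : Matrix (Dix n) (Dix n) ℂ) (a b : Fin 2) (p f : Dix n) :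
    swLink U V ((a, p), (b, f)) =
      (if a = 0 ∧ b = 0 then (V * U) f p else 0) +
        (if a = 1 ∧ b = 1 then (U * V) f p else 0) := by
  simp only [swLink, swVec, choiV, Fintype.sum_prod_type, mul_apply]
  fin_cases a <;> fin_cases b <;>
    simp [ite_and, Finset.sum_ite_eq, Finset.sum_ite_eq', mul_comm]

/-- The block `(a, b)` of `|C⟩ ∗ (|U_1⟩⟩ ⊗ ⋯ ⊗ |U_M⟩⟩ ⊗ |V⟩⟩)`, where `a` and `b` are the control
indices in `P_C` and `F_C`, as a matrix depending multilinearly on `U`. -/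
noncomputable def linkMultilinear (C : PFix n × (Fin M → Sl n) × Sl n × PFix n → ℂ)
    (V : Matrix (Dix n) (Dix n) ℂ) (a b : Fin 2) :
    MultilinearMap ℂ (fun _ : Fin M => Matrix (Dix n) (Dix n) ℂ) (Matrix (Dix n) (Dix n) ℂ) :=
  ∑ s : Fin M → Sl n,
    ((MultilinearMap.mkPiAlgebra ℂ (Fin M) ℂ).compLinearMap
      (fun i => entryLinearMap ℂ ℂ (s i).2 (s i).1)).smulRight
      (of fun f p => ∑ t, C ((a, p), s, t, (b, f)) * choiV V t)

lemma linkMultilinear_apply (C : PFix n × (Fin M → Sl n) × Sl n × PFix n → ℂ)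
    (U : Fin M → Matrix (Dix n) (Dix n) ℂ) (V : Matrix (Dix n) (Dix n) ℂ) (a b : Fin 2)
    (f p : Dix n) :
    linkMultilinear C V a b U f p = linkC C U V ((a, p), (b, f)) := by
  simp only [linkMultilinear, linkC, _root_.sum_apply, Matrix.sum_apply,
    MultilinearMap.smulRight_apply, MultilinearMap.compLinearMap_apply,
    MultilinearMap.mkPiAlgebra_apply, entryLinearMap_apply, Matrix.smul_apply, of_apply,
    smul_eq_mul, Finset.mul_sum]
  refine Finset.sum_congr rfl fun s _ => Finset.sum_congr rfl fun t _ => ?_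
  simp only [choiV]
  ring

/-- The same block as a linear function of the matrix in the slot `I′_1 ⊗ O′_1`. -/
noncomputable def linkLinear (C : PFix n × (Fin M → Sl n) × Sl n × PFix n → ℂ)
    (U : Fin M → Matrix (Dix n) (Dix n) ℂ) (a b : Fin 2) :
    Matrix (Dix n) (Dix n) ℂ →ₗ[ℂ] Matrix (Dix n) (Dix n) ℂ where
  toFun V := of fun f p => linkC C U V ((a, p), (b, f))
  map_add' V W := by
    ext f p
    simp [linkC, choiV, mul_add, Finset.sum_add_distrib]
  map_smul' c V := by
    ext f p
    simp only [linkC, choiV, of_apply, Matrix.smul_apply, smul_eq_mul, RingHom.id_apply,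
      Finset.mul_sum]
    refine Finset.sum_congr rfl fun s _ => Finset.sum_congr rfl fun t _ => ?_
    ring

end

/-- if for every tuple of `n`-qubit unitaries `(U_1, …, U_M, V_1)` the
contraction of `|C⟩` lies in the span of the `|S_SWITCH⟩ ∗ (|U_k⟩⟩ ⊗ |V_1⟩⟩)`, then
(provided `M < 4^n/2 + 2`) the coefficients can be chosen so that, for each `k`,
`ξ̃_{k1}` is independent of `U_k` and `V_1` and is the restriction to unitaries of a
function multilinear in the matrices `(U_i)_{i ≠ k}`. -/
theorem stmt_3 (n M : ℕ) (hn : 1 ≤ n) (hM : 1 ≤ M) (hMbound : 2 * M < 4 ^ n + 4)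
    (C : PFix n × (Fin M → Sl n) × Sl n × PFix n → ℂ)
    (hC : ∀ (U : Fin M → Matrix (Dix n) (Dix n) ℂ) (V : Matrix (Dix n) (Dix n) ℂ),
      (∀ i, U i ∈ Matrix.unitaryGroup (Dix n) ℂ) → V ∈ Matrix.unitaryGroup (Dix n) ℂ →
      ∃ ξ : Fin M → ℂ,
        linkC C U V = fun pf => ∑ k, ξ k * swLink (U k) V pf) :
    ∃ ξ' : Fin M → (Fin M → Matrix (Dix n) (Dix n) ℂ) → Matrix (Dix n) (Dix n) ℂ → ℂ,
      (∀ (U : Fin M → Matrix (Dix n) (Dix n) ℂ) (V : Matrix (Dix n) (Dix n) ℂ),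
        (∀ i, U i ∈ Matrix.unitaryGroup (Dix n) ℂ) → V ∈ Matrix.unitaryGroup (Dix n) ℂ →
        linkC C U V = fun pf => ∑ k, ξ' k U V * swLink (U k) V pf) ∧
      (∀ k : Fin M,
        -- independence: `ξ̃_{k1}` does not depend on `U_k` nor on `V_1`
        (∀ U U' V V', (∀ i, i ≠ k → U i = U' i) → ξ' k U V = ξ' k U' V') ∧
        -- linearity: restriction to unitaries of a multilinear function of `(U_i)_{i ≠ k}`
        ∃ L : MultilinearMap ℂ
            (fun _ : {i : Fin M // i ≠ k} => Matrix (Dix n) (Dix n) ℂ) ℂ,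
          ∀ (U : Fin M → Matrix (Dix n) (Dix n) ℂ) (V : Matrix (Dix n) (Dix n) ℂ),
            (∀ i, U i ∈ Matrix.unitaryGroup (Dix n) ℂ) →
            V ∈ Matrix.unitaryGroup (Dix n) ℂ →
            ξ' k U V = L (fun i => U i.1)) := by
  have h4 : 4 ≤ 4 ^ n := by
    calc 4 = 4 ^ 1 := (pow_one 4).symm
      _ ≤ 4 ^ n := Nat.pow_le_pow_right (by norm_num) hn
  have hfin : Module.finrank ℂ (Matrix (Dix n) (Dix n) ℂ) = 4 ^ n := by
    rw [Module.finrank_matrix, Module.finrank_self, Fintype.card_fin, mul_one, ← mul_pow]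
    norm_num
  have hcard : Fintype.card (Fin M) < Module.finrank ℂ (Matrix (Dix n) (Dix n) ℂ) := by
    rw [hfin, Fintype.card_fin]; omega
  have : Nontrivial (Dix n) := Fin.nontrivial_iff_two_le.mpr (by
    calc 2 = 2 ^ 1 := (pow_one 2).symm
      _ ≤ 2 ^ n := Nat.pow_le_pow_right (by norm_num) hn)
  have hblock : ∀ (U : Fin M → Matrix (Dix n) (Dix n) ℂ) (V : Matrix (Dix n) (Dix n) ℂ)
      (ξ : Fin M → ℂ), (linkC C U V = fun pf => ∑ k, ξ k * swLink (U k) V pf) →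
      linkLinear C U 0 0 V = V * ∑ k, ξ k • U k ∧
      linkLinear C U 1 1 V = (∑ k, ξ k • U k) * V := by
    intro U V ξ h
    constructor <;> ext f p <;>
      simp [linkLinear, h, swLink_apply, Finset.mul_sum, Finset.sum_mul, Matrix.sum_apply]
  have hX1 : ∀ U, linkMultilinear C 1 0 0 U = linkLinear C U 0 0 1 := by
    intro U; ext f p
    rw [linkMultilinear_apply]; rfl
  have hspan : ∀ (U : Fin M → Matrix (Dix n) (Dix n) ℂ) (ξ : Fin M → ℂ),
      ∑ k, ξ k • U k ∈ Submodule.span ℂ (Set.range U) := fun U ξ =>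
    Submodule.sum_mem _ fun k _ => Submodule.smul_mem _ _ (Submodule.subset_span ⟨k, rfl⟩)
  have hX : ∀ U : Fin M → Matrix (Dix n) (Dix n) ℂ, (∀ i, U i ∈ unitaryGroup (Dix n) ℂ) →
      linkMultilinear C 1 0 0 U ∈ Submodule.span ℂ (Set.range U) := by
    intro U hU
    obtain ⟨ξ, hξ⟩ := hC U 1 hU (one_mem _)
    rw [hX1, (hblock U 1 ξ hξ).1, one_mul]
    exact hspan U ξ
  obtain ⟨L, hL⟩ := exists_multilinear_coeffs (linkMultilinear C 1 0 0) hcard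
    (mem_span_of_unitary _ hX)
  refine ⟨fun k U _ => L k (fun i => U i), fun U V hU hV => ?_, fun k => ⟨?_, L k, ?_⟩⟩
  · have hAV := eq_mul_of_unitary_mem (Submodule.span ℂ (Set.range U)) (by
        intro htop
        obtain ⟨w, hw⟩ := exists_notMem_span_range (K := ℂ) U hcard
        exact hw (htop ▸ Submodule.mem_top)) (U ⟨0, hM⟩) (hU _) (Submodule.subset_span ⟨_, rfl⟩)
      (linkLinear C U 0 0) (linkLinear C U 1 1) (by
        intro W hW
        obtain ⟨ξ, hξ⟩ := hC U W hU hW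
        rw [(hblock U W ξ hξ).1, ← mul_assoc, mem_unitaryGroup_iff'.mp hW, one_mul]
        exact hspan U ξ) (by
        intro W hW
        obtain ⟨ξ, hξ⟩ := hC U W hU hW
        rw [(hblock U W ξ hξ).1, (hblock U W ξ hξ).2, mul_assoc]) V
    obtain ⟨ξ, hξ⟩ := hC U V hU hV
    have hsum : ∑ k, ξ k • U k = ∑ k, L k (fun i => U i) • U k := by
      rw [← hL, hX1]
      rw [(hblock U V ξ hξ).1] at hAV
      have := congrArg (fun m => star V * m) hAV
      simpa only [← mul_assoc, mem_unitaryGroup_iff'.mp hV, one_mul] using this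
    have hlin : ∀ (c : Fin M → ℂ) (a b : Fin 2) (p f : Dix n),
        ∑ k, c k * swLink (U k) V ((a, p), (b, f)) =
          swLink (∑ k, c k • U k) V ((a, p), (b, f)) := by
      intro c a b p f
      simp only [swLink_apply, Finset.mul_sum, Finset.sum_mul, Matrix.sum_apply, mul_add,
        Finset.sum_add_distrib, mul_smul_comm, smul_mul_assoc, Matrix.smul_apply, smul_eq_mul]
      split_ifs <;> simp
    rw [hξ]
    funext ⟨⟨a, p⟩, ⟨b, f⟩⟩
    rw [hlin, hsum, ← hlin]
  · intro U U' V V' h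
    exact congrArg (L k) (funext fun i => h i i.2)
  · exact fun U V _ _ => rfl
end

section
/- Let d ≥ 2 and M, N ≥ 1 with max(M, N) ≤ max(2, d − 1). Suppose the family {C_{P r F}}, indexed by permutations r of (1,…,M+N), with each C_{P r F} a matrix on P ⊗ (⊗_{s=1}^{M+N} I_s ⊗ O_s) ⊗ F (I_s, O_s ≅ ℂ^d; P = P_C ⊗ P_T, F = F_C ⊗ F_T with P_C, F_C ≅ ℂ², P_T, F_T ≅ ℂ^d; write I′_k := I_{M+k}, O′_k := O_{M+k}), satisfies the QC-CC conditions. Then it is impossible that every C_{P r F} admits a decomposition C_{P r F} = Σ_a |C_r^{(a)}⟩⟨C_r^{(a)}| with |C_r^{(a)}⟩ = Σ_{i=1}^M Σ_{k=1}^N |S_SWITCH⟩^{I_i O_i I′_k O′_k P_C P_T F_C F_T} ⊗ |ξ^{(a),r}_{ik}⟩, where |ξ^{(a),r}_{ik}⟩ ∈ (⊗_{i′≠i} I_{i′} ⊗ O_{i′}) ⊗ (⊗_{k′≠k} I′_{k′} ⊗ O′_{k′}). -/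
/-!
Everything happens on diagonal entries, where the QC-CC conditions become classical: the
diagonal of `C_{P w}` is nonnegative, equals a sum of diagonal entries of the `C_{P r F}` over
the permutations `r` extending `w`, and does not depend on the output label of the last letter
of `w`. So if, at fixed other labels, the diagonal entries of all extensions vanish for one
value of that output, they vanish for all of its values (`diagCp_spec`).

Going backwards through the positions, one shows that in each vector `|C_r^{(a)}⟩` only the
terms `(i, k)` whose two slots both occur among the first `m` letters of `r` contribute. For
the step from `m + 1` to `m`, suppose that the last of the `m + 1` letters is the slot
`I_i O_i`; the case of a slot `I′_k O′_k` is the same with the two control values exchanged. Take control value `0`, a target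
input differing from every `I` label except that of slot `i` (possible as `M ≤ d`), and an
output `z` of slot `i` differing from every `I′` label. All amplitudes then vanish, hence they
vanish for all outputs of slot `i`. This says that
`Σ_k [x = I′_k] [O′_k = f] ξ_{ik} = 0` whenever the `I′` labels miss some value, which is
always so if `N < d`. If `N ≤ 2`, labels in which all `I′_k` agree but the `O′_k` differ show that
each `ξ_{ik}` vanishes. Since the same sum gives the contribution of slot `i` in both branches
of the switch, that slot drops out altogether (`last_slot_unused`).

At `m = 0` no term is left, so all diagonal entries vanish, against condition (iv).
-/

open scoped ComplexConjugate ComplexOrder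

/-- Index of a slot `I_s ⊗ O_s` (two copies of `ℂ^d`). -/
abbrev DD (d : ℕ) := Fin d × Fin d
/-- Index of `P = P_C ⊗ P_T` (resp. `F = F_C ⊗ F_T`): `ℂ² ⊗ ℂ^d`. -/
abbrev PFq (d : ℕ) := Fin 2 × Fin d
/-- Index of the full space `P ⊗ (⊗_{s=1}^K I_s ⊗ O_s) ⊗ F`. -/
abbrev FullQ (d K : ℕ) := PFq d × (Fin K → DD d) × PFq d
/-- Index of the space `P ⊗ I_{r_1} ⊗ O_{r_1} ⊗ ⋯ ⊗ I_{r_m} ⊗ O_{r_m} ⊗ I_{r_{m+1}}`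
carrying a partial operator `C_{P r_1 … r_{m+1}}` for a word of length `m + 1`. -/
abbrev PartQ (d m : ℕ) := PFq d × (Fin m → DD d) × Fin d

/-- The QC-CC conditions for a family `{C_{P r F}}` indexed by permutations `r` of the
`K` slots: (i) each `C_{P r F}` is positive semidefinite, and there exists a family of
partial operators `C_{P r_1 … r_m}` (indexed by words; here `Cp m w` is the operator for
the word `w` of length `m + 1`, acting on `P ⊗ I_{w 0} O_{w 0} ⊗ ⋯ ⊗ I_{w (m-1)} O_{w (m-1)}
⊗ I_{w m}`) satisfying the defining recursions
`C_{P r_1 … r_K} = (1/d) Tr_{O_{r_K} F}[C_{P r F}]` and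
`C_{P r_1 … r_m} = (1/d) Σ_{r_{m+1}} Tr_{O_{r_m} I_{r_{m+1}}}[C_{P r_1 … r_m r_{m+1}}]`,
together with (ii) `Tr_F[C_{P r F}] = C_{P r_1 … r_K} ⊗ 1^{O_{r_K}}`,
(iii) `Σ_{r_{m+1}} Tr_{I_{r_{m+1}}}[C_{P r_1 … r_m r_{m+1}}] = C_{P r_1 … r_m} ⊗ 1^{O_{r_m}}`
for all sequences of distinct indices, and (iv) `Σ_{r_1} Tr_{I_{r_1}}[C_{P r_1}] = 1^P`.
All equations are written entrywise; in (ii) and the top recursion, `q : Fin K → DD d`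
lists the slot indices in the natural slot order and `w := r ∘ cast` is the word of the
permutation `r`. -/
def IsQCCC (d K : ℕ) (Cfam : Equiv.Perm (Fin K) → Matrix (FullQ d K) (FullQ d K) ℂ) :
    Prop :=
  (∀ r, (Cfam r).PosSemidef) ∧
  ∃ Cp : (m : ℕ) → (Fin (m + 1) → Fin K) → Matrix (PartQ d m) (PartQ d m) ℂ,
    -- top recursion: `C_{P r_1 … r_K} = (1/d) Tr_{O_{r_K} F}[C_{P r F}]`
    (∀ (r : Equiv.Perm (Fin K)) (mm : ℕ) (h : mm + 1 = K)
        (p p' : PFq d) (q q' : Fin K → DD d),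
      Cp mm (fun s => r (Fin.cast h s))
          (p, fun s : Fin mm => q (r (Fin.cast h s.castSucc)),
            (q (r (Fin.cast h (Fin.last mm)))).1)
          (p', fun s : Fin mm => q' (r (Fin.cast h s.castSucc)),
            (q' (r (Fin.cast h (Fin.last mm)))).1) =
        (d : ℂ)⁻¹ * ∑ o : Fin d, ∑ f : PFq d,
          Cfam r
            (p, Function.update q (r (Fin.cast h (Fin.last mm)))
              ((q (r (Fin.cast h (Fin.last mm)))).1, o), f)
            (p', Function.update q' (r (Fin.cast h (Fin.last mm)))
              ((q' (r (Fin.cast h (Fin.last mm)))).1, o), f)) ∧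
    -- condition (ii): `Tr_F[C_{P r F}] = C_{P r_1 … r_K} ⊗ 1^{O_{r_K}}`
    (∀ (r : Equiv.Perm (Fin K)) (mm : ℕ) (h : mm + 1 = K)
        (p p' : PFq d) (q q' : Fin K → DD d),
      (∑ f : PFq d, Cfam r (p, q, f) (p', q', f)) =
        Cp mm (fun s => r (Fin.cast h s))
          (p, fun s : Fin mm => q (r (Fin.cast h s.castSucc)),
            (q (r (Fin.cast h (Fin.last mm)))).1)
          (p', fun s : Fin mm => q' (r (Fin.cast h s.castSucc)),
            (q' (r (Fin.cast h (Fin.last mm)))).1) *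
        (if (q (r (Fin.cast h (Fin.last mm)))).2 = (q' (r (Fin.cast h (Fin.last mm)))).2
          then 1 else 0)) ∧
    -- recursion: `C_{P u} = (1/d) Σ_{x ∉ u} Tr_{O_{u_last} I_x}[C_{P u x}]`
    (∀ (mm : ℕ), mm + 2 ≤ K → ∀ (u : Fin (mm + 1) → Fin K), Function.Injective u →
      ∀ (p p' : PFq d) (g g' : Fin mm → DD d) (iL iL' : Fin d),
      Cp mm u (p, g, iL) (p', g', iL') =
        (d : ℂ)⁻¹ * ∑ x : Fin K, (if ∃ y, u y = x then 0 else
          ∑ o : Fin d, ∑ ii : Fin d,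
            Cp (mm + 1) (Fin.snoc u x)
              (p, Fin.snoc g ((iL, o) : DD d), ii)
              (p', Fin.snoc g' ((iL', o) : DD d), ii))) ∧
    -- condition (iii): `Σ_{x ∉ u} Tr_{I_x}[C_{P u x}] = C_{P u} ⊗ 1^{O_{u_last}}`
    (∀ (mm : ℕ), mm + 2 ≤ K → ∀ (u : Fin (mm + 1) → Fin K), Function.Injective u →
      ∀ (p p' : PFq d) (g g' : Fin mm → DD d) (iL iL' : Fin d) (o o' : Fin d),
      (∑ x : Fin K, if ∃ y, u y = x then 0 else
          ∑ ii : Fin d, Cp (mm + 1) (Fin.snoc u x)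
            (p, Fin.snoc g ((iL, o) : DD d), ii)
            (p', Fin.snoc g' ((iL', o') : DD d), ii)) =
        Cp mm u (p, g, iL) (p', g', iL') * (if o = o' then 1 else 0)) ∧
    -- condition (iv): `Σ_{r_1} Tr_{I_{r_1}}[C_{P r_1}] = 1^P`
    (∀ p p' : PFq d,
      (∑ x : Fin K, ∑ ii : Fin d,
          Cp 0 (fun _ => x)
            (p, fun s : Fin 0 => s.elim0, ii)
            (p', fun s : Fin 0 => s.elim0, ii)) =
        if p = p' then 1 else 0)

/-- Component of the switch Choi vector `|S_SWITCH⟩` at `P`-index `p`, `(I, O)`-index `io`,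
`(I′, O′)`-index `jo` and `F`-index `f`. -/
noncomputable def swVecd {d : ℕ} (p : PFq d) (io jo : DD d) (f : PFq d) : ℂ :=
  (if p.1 = 0 ∧ f.1 = 0 ∧ p.2 = io.1 ∧ io.2 = jo.1 ∧ jo.2 = f.2 then 1 else 0) +
  (if p.1 = 1 ∧ f.1 = 1 ∧ p.2 = jo.1 ∧ jo.2 = io.1 ∧ io.2 = f.2 then 1 else 0)

/-- The vector `Σ_{i=1}^M Σ_{k=1}^N |S_SWITCH⟩^{I_i O_i I′_k O′_k P_C P_T F_C F_T} ⊗ |ξ_{ik}⟩`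
on the full space, where slot `Fin.castAdd N i` carries `I_i ⊗ O_i`, slot `Fin.natAdd M k`
carries `I′_k ⊗ O′_k`, and `|ξ_{ik}⟩` is a vector on the remaining slot factors. -/
noncomputable def decompVec (d M N : ℕ)
    (ξ : (i : Fin M) → (k : Fin N) →
      (({s : Fin (M + N) // s ≠ Fin.castAdd N i ∧ s ≠ Fin.natAdd M k} → DD d) → ℂ)) :
    FullQ d (M + N) → ℂ :=
  fun x =>
    match x with
    | (p, q, f) =>
      ∑ i : Fin M, ∑ k : Fin N,
        swVecd p (q (Fin.castAdd N i)) (q (Fin.natAdd M k)) f * ξ i k (fun s => q s.1)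

/-! ### Cancellation of the terms using the last slot -/

/-- Component of the Choi vector of the switch in which the control value `c` sends the
target through the slot of `io` first and `c'` sends it through the slot of `jo` first.
The switch is `swc 0 1`, and also `swc 1 0` with the two slots exchanged, so one argument
covers both kinds of slots. -/
noncomputable def swc {d : ℕ} (c c' : Fin 2) (p : PFq d) (io jo : DD d) (f : PFq d) : ℂ :=
  (if p.1 = c ∧ f.1 = c ∧ p.2 = io.1 ∧ io.2 = jo.1 ∧ jo.2 = f.2 then 1 else 0) +
  (if p.1 = c' ∧ f.1 = c' ∧ p.2 = jo.1 ∧ jo.2 = io.1 ∧ io.2 = f.2 then 1 else 0)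

lemma swVecd_eq_swc_swap {d : ℕ} (p : PFq d) (io jo : DD d) (f : PFq d) :
    swVecd p io jo f = swc 1 0 p jo io f := by
  unfold swVecd swc
  exact add_comm _ _

lemma exists_ne_image {γ : Type*} {d : ℕ} (s : Finset γ) (hs : s.card < d) (g : γ → Fin d) :
    ∃ z, ∀ k ∈ s, z ≠ g k := by
  classical
  obtain ⟨z, -, hz⟩ := Finset.exists_mem_notMem_of_card_lt_card
    (s := s.image g) (t := Finset.univ)
    (lt_of_le_of_lt Finset.card_image_le (by simpa using hs))
  exact ⟨z, fun k hk h => hz (Finset.mem_image.2 ⟨k, hk, h.symm⟩)⟩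

lemma ite_mul_split {P Q R : Prop} [Decidable P] [Decidable Q] [Decidable R]
    (h : P ↔ Q ∧ R) (x : ℂ) :
    (if P then 1 else 0) * x = (if Q then 1 else 0) * (if R then x else 0) := by
  by_cases hQ : Q <;> by_cases hR : R <;> simp [h, hQ, hR]

/-- If only slots in `S` are used and `eA i0` is the last of them, the terms pairing `eA i0`
with any `eB k` cancel. The hypothesis `hN` is what causality gives: amplitudes that vanish
for one value of the output `O` of the last slot vanish for all of its values. -/
lemma last_slot_unused {α β ι : Type*} [Fintype α] [Fintype β] [DecidableEq α] [DecidableEq β]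
    {d K : ℕ} (hd : 2 ≤ d) (c c' : Fin 2) (hcc : c ≠ c')
    (eA : α → Fin K) (eB : β → Fin K)
    (hA : Function.Injective eA) (hB : Function.Injective eB) (hAB : ∀ i k, eA i ≠ eB k)
    (S : Fin K → Prop) [DecidablePred S]
    (ξ : ι → α → β → (Fin K → DD d) → ℂ)
    (hξ : ∀ j i k q q', (∀ s, s ≠ eA i → s ≠ eB k → q s = q' s) → ξ j i k q = ξ j i k q')
    (v : ι → PFq d → (Fin K → DD d) → PFq d → ℂ)
    (hv : ∀ j p q f, v j p q f = ∑ i, ∑ k, if S (eA i) ∧ S (eB k) then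
      swc c c' p (q (eA i)) (q (eB k)) f * ξ j i k q else 0)
    (i0 : α) (hi0 : S (eA i0))
    (hN : ∀ p q, (∀ j q' f, (∀ s, S s → q' s = q s) → v j p q' f = 0) →
      ∀ j x f, v j p (Function.update q (eA i0) ((q (eA i0)).1, x)) f = 0)
    (hα : Fintype.card α ≤ d) (hβ : Fintype.card β < d ∨ Fintype.card β ≤ 2) :
    ∀ j p q f, (∑ k, if S (eB k) then
      swc c c' p (q (eA i0)) (q (eB k)) f * ξ j i0 k q else 0) = 0 := by
  -- If some `z` differs from all inputs of the `eB` slots, feeding `z` out of `eA i0` kills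
  -- every amplitude whose target input matches only the slot `eA i0`.
  have h1 : ∀ j q x f z, (∀ k, z ≠ (q (eB k)).1) →
      (∑ k, if S (eB k) ∧ x = (q (eB k)).1 ∧ (q (eB k)).2 = f then ξ j i0 k q else 0) = 0 := by
    intro j q x f z hz
    obtain ⟨π, hπ⟩ := exists_ne_image (Finset.univ.erase i0)
      (by rw [Finset.card_erase_of_mem (Finset.mem_univ _), Finset.card_univ]; omega)
      (fun i => (q (eA i)).1)
    have key := hN (c, π) (Function.update q (eA i0) (π, z)) (by
      intro j q' f hq
      rw [hv]
      refine Finset.sum_eq_zero fun i _ => Finset.sum_eq_zero fun k _ => ?_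
      split_ifs with hS
      · have hk := hq _ hS.2
        rw [Function.update_of_ne (hAB i0 k).symm] at hk
        have hi := hq _ hS.1
        by_cases h : i = i0
        · subst h
          rw [Function.update_self] at hi
          simp [swc, hi, hk, hz k, hcc]
        · rw [Function.update_of_ne (fun e => h (hA e))] at hi
          have := hπ i (by simp [h])
          simp [swc, hi, hk, this, hcc]
      · rfl) j x (c, f)
    rw [hv, Finset.sum_eq_single i0] at key
    · refine Eq.trans (Finset.sum_congr rfl fun k _ => ?_) key
      have e : ξ j i0 k (Function.update (Function.update q (eA i0) (π, z)) (eA i0)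
          (((Function.update q (eA i0) (π, z)) (eA i0)).1, x)) = ξ j i0 k q := by
        apply hξ
        intro s hs _
        rw [Function.update_of_ne hs, Function.update_of_ne hs]
      rw [e]
      simp only [Function.update_self, Function.update_of_ne (hAB i0 k).symm, hi0, true_and]
      by_cases h3 : S (eB k) <;> simp [swc, h3, hcc]
    · intro i _ hi
      refine Finset.sum_eq_zero fun k _ => ?_
      have := hπ i (by simp [hi])
      have hne : eA i ≠ eA i0 := fun e => hi (hA e)
      simp [swc, Function.update_of_ne hne, this, hcc]
    · simp
  have h2 : ∀ j q x f,
      (∑ k, if S (eB k) ∧ x = (q (eB k)).1 ∧ (q (eB k)).2 = f then ξ j i0 k q else 0) = 0 := by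
    intro j q x f
    rcases hβ with hβ | hβ
    · obtain ⟨z, hz⟩ := exists_ne_image (Finset.univ : Finset β)
        (by rwa [Finset.card_univ]) (fun k => (q (eB k)).1)
      exact h1 j q x f z fun k => hz k (Finset.mem_univ _)
    · refine Finset.sum_eq_zero fun k _ => ?_
      split_ifs with hS
      · -- With at most two `eB` slots, giving both the same input `y` but different outputs
        -- isolates the single coefficient `ξ j i0 k q`.
        obtain ⟨y, o, hyo⟩ : ∃ y o : Fin d, ∀ k', k' ≠ k →
            (q (eB k')).1 = y ∧ (q (eB k')).2 = o := by
          by_cases h : ∃ k1, k1 ≠ k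
          · obtain ⟨k1, hk1⟩ := h
            refine ⟨(q (eB k1)).1, (q (eB k1)).2, fun k' hk' => ?_⟩
            have : k' = k1 := by
              by_contra hne
              have h3 : ({k, k1, k'} : Finset β).card = 3 :=
                Finset.card_eq_three.2 ⟨k, k1, k', hk1.symm, hk'.symm, Ne.symm hne, rfl⟩
              have := Finset.card_le_univ ({k, k1, k'} : Finset β)
              omega
            subst this
            exact ⟨rfl, rfl⟩
          · exact ⟨x, x, fun k' hk' => absurd ⟨k', hk'⟩ h⟩
        have : Nontrivial (Fin d) := Fin.nontrivial_iff_two_le.2 hd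
        obtain ⟨z, hz⟩ := exists_ne y
        obtain ⟨f', hf'⟩ := exists_ne o
        have hq1 : ∀ k', k' ≠ k → Function.update q (eB k) (y, f') (eB k') = q (eB k') :=
          fun k' hk' => Function.update_of_ne (fun e => hk' (hB e)) _ _
        have key := h1 j (Function.update q (eB k) (y, f')) y f' z (by
          intro k'
          by_cases h : k' = k
          · subst h; simpa using hz
          · rw [hq1 k' h, (hyo k' h).1]; exact hz)
        rw [Finset.sum_eq_single k] at key
        · simp only [Function.update_self, and_self, hS.1, if_true] at key
          rw [← key]
          apply hξ
          intro s _ hs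
          rw [Function.update_of_ne hs]
        · intro k' _ hk'
          rw [hq1 k' hk', (hyo k' hk').2, if_neg]
          exact fun h => hf' h.2.2.symm
        · simp
      · rfl
  intro j p q f
  -- Both control branches are the same cancelling sum, at different target labels.
  have e : ∀ k, (if S (eB k) then
      swc c c' p (q (eA i0)) (q (eB k)) f * ξ j i0 k q else 0) =
      (if p.1 = c ∧ f.1 = c ∧ p.2 = (q (eA i0)).1 then 1 else 0) *
        (if S (eB k) ∧ (q (eA i0)).2 = (q (eB k)).1 ∧ (q (eB k)).2 = f.2
          then ξ j i0 k q else 0) +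
      (if p.1 = c' ∧ f.1 = c' ∧ (q (eA i0)).2 = f.2 then 1 else 0) *
        (if S (eB k) ∧ p.2 = (q (eB k)).1 ∧ (q (eB k)).2 = (q (eA i0)).1
          then ξ j i0 k q else 0) := by
    intro k
    unfold swc
    by_cases hS : S (eB k)
    · simp only [hS, if_true, true_and, add_mul]
      congr 1
      · exact ite_mul_split (by tauto) _
      · exact ite_mul_split (by tauto) _
    · simp [hS]
  simp only [e, Finset.sum_add_distrib, ← Finset.mul_sum, h2, mul_zero, add_zero]

/-! ### Causality on diagonal entries -/

/-- Diagonal entry of `C_{P w}` at the basis state given by `p` and the slot labels `q`. -/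
def diagCp {d K : ℕ}
    (Cp : (m : ℕ) → (Fin (m + 1) → Fin K) → Matrix (PartQ d m) (PartQ d m) ℂ)
    (m : ℕ) (w : Fin (m + 1) → Fin K) (p : PFq d) (q : Fin K → DD d) : ℂ :=
  Cp m w (p, fun s : Fin m => q (w s.castSucc), (q (w (Fin.last m))).1)
    (p, fun s : Fin m => q (w s.castSucc), (q (w (Fin.last m))).1)

/-- A diagonal entry of `C_{P w}` is nonnegative, and it vanishes exactly when the diagonal
entries of all `C_{P r F}` with `r` extending `w` vanish at compatible labels. The value of
the output label of the last letter of `w` is free in one direction and fixed in the other;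
this is the causality constraint. -/
lemma diagCp_spec {d K : ℕ}
    (D : Equiv.Perm (Fin K) → PFq d → (Fin K → DD d) → PFq d → ℂ)
    (hD : ∀ r p q f, 0 ≤ D r p q f)
    (Cp : (m : ℕ) → (Fin (m + 1) → Fin K) → Matrix (PartQ d m) (PartQ d m) ℂ)
    (htop : ∀ (r : Equiv.Perm (Fin K)) (m : ℕ) (h : m + 1 = K) (p : PFq d) (q : Fin K → DD d),
      ∑ f, D r p q f = diagCp Cp m (fun s => r (Fin.cast h s)) p q)
    (hstep : ∀ m, m + 2 ≤ K → ∀ (u : Fin (m + 1) → Fin K), Function.Injective u →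
      ∀ (p : PFq d) (g : Fin m → DD d) (iL o : Fin d),
      (∑ x : Fin K, if ∃ y, u y = x then 0 else
          ∑ ii : Fin d, Cp (m + 1) (Fin.snoc u x)
            (p, Fin.snoc g ((iL, o) : DD d), ii)
            (p, Fin.snoc g ((iL, o) : DD d), ii)) =
        Cp m u (p, g, iL) (p, g, iL)) :
    ∀ n m (h : m + 1 + n = K) (w : Fin (m + 1) → Fin K), Function.Injective w →
      ∀ p q, 0 ≤ diagCp Cp m w p q ∧
      (diagCp Cp m w p q = 0 → ∀ r : Equiv.Perm (Fin K),
        (∀ s : Fin (m + 1), r (Fin.castLE (by omega) s) = w s) →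
        ∀ q', (∀ s : Fin m, q' (w s.castSucc) = q (w s.castSucc)) →
          (q' (w (Fin.last m))).1 = (q (w (Fin.last m))).1 → ∀ f, D r p q' f = 0) ∧
      ((∀ r : Equiv.Perm (Fin K),
        (∀ s : Fin (m + 1), r (Fin.castLE (by omega) s) = w s) →
        ∀ q', (∀ s, q' (w s) = q (w s)) → ∀ f, D r p q' f = 0) →
        diagCp Cp m w p q = 0) := by
  intro n
  induction n with
  | zero =>
    intro m h w hw p q
    have h' : m + 1 = K := h
    subst h'
    obtain ⟨r, hr⟩ : ∃ r : Equiv.Perm (Fin (m + 1)), ∀ s, r s = w s :=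
      ⟨Equiv.ofBijective w (Finite.injective_iff_bijective.1 hw), fun s => rfl⟩
    have ht : ∀ q, ∑ f, D r p q f = diagCp Cp m w p q := by
      intro q
      rw [htop r m rfl p q]
      congr 1
      funext s
      exact hr s
    have hcast : ∀ s : Fin (m + 1), Fin.castLE (le_refl (m + 1)) s = s := fun s => rfl
    refine ⟨?_, ?_, ?_⟩
    · rw [← ht]
      exact Finset.sum_nonneg fun f _ => hD _ _ _ _
    · intro h0 r' hr' q' hq1 hq2 f
      have : r' = r := by
        ext s
        rw [hr s, ← hr' s]
        rfl
      subst this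
      have e : diagCp Cp m w p q' = diagCp Cp m w p q := by
        unfold diagCp
        simp only [hq1, hq2]
      rw [← e, ← ht q', Finset.sum_eq_zero_iff_of_nonneg (fun f _ => hD _ _ _ _)] at h0
      exact h0 f (Finset.mem_univ _)
    · intro h0
      rw [← ht]
      exact Finset.sum_eq_zero fun f _ => h0 r (fun s => hr s) q (fun _ => rfl) f
  | succ n ih =>
    intro m h w hw p q
    have hinj : ∀ x, (¬ ∃ y, w y = x) → Function.Injective (Fin.snoc w x : Fin (m + 2) → Fin K) :=
      fun x hx => Fin.snoc_injective_of_injective hw (fun ⟨y, hy⟩ => hx ⟨y, hy⟩)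
    -- labels realizing output `o` at the last letter of `w` and input `ii` at the new letter
    let qq : Fin d → Fin K → Fin d → Fin K → DD d := fun o x ii =>
      Function.update (Function.update q (w (Fin.last m)) ((q (w (Fin.last m))).1, o)) x (ii, o)
    have hqx : ∀ o x ii, qq o x ii x = (ii, o) := fun o x ii => by simp [qq]
    have hql : ∀ o x ii, (¬ ∃ y, w y = x) →
        qq o x ii (w (Fin.last m)) = ((q (w (Fin.last m))).1, o) := fun o x ii hx => by
      simp only [qq]
      rw [Function.update_of_ne (fun e => hx ⟨_, e⟩), Function.update_self]
    have hqc : ∀ o x ii, (¬ ∃ y, w y = x) → ∀ s : Fin m,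
        qq o x ii (w s.castSucc) = q (w s.castSucc) := fun o x ii hx s => by
      simp only [qq]
      rw [Function.update_of_ne (fun e => hx ⟨_, e⟩),
        Function.update_of_ne (fun e => (Fin.castSucc_lt_last s).ne (hw e))]
    have hs : ∀ o, (∑ x : Fin K, if ∃ y, w y = x then 0 else
        ∑ ii : Fin d, diagCp Cp (m + 1) (Fin.snoc w x) p (qq o x ii)) = diagCp Cp m w p q := by
      intro o
      refine Eq.trans ?_ (hstep m (by omega) w hw p (fun s => q (w s.castSucc))
        (q (w (Fin.last m))).1 o)
      refine Finset.sum_congr rfl fun x _ => ?_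
      split_ifs with hx
      · rfl
      · refine Finset.sum_congr rfl fun ii _ => ?_
        have e : (fun s : Fin (m + 1) => qq o x ii
            ((Fin.snoc w x : Fin (m + 2) → Fin K) s.castSucc)) =
            Fin.snoc (fun s => q (w s.castSucc)) (((q (w (Fin.last m))).1, o) : DD d) := by
          funext s
          refine Fin.lastCases ?_ (fun s => ?_) s
          · simp only [Fin.snoc_castSucc, Fin.snoc_last, hql o x ii hx]
          · simp only [Fin.snoc_castSucc, hqc o x ii hx]
        unfold diagCp
        simp only [e, Fin.snoc_last, hqx]
    have hnn : ∀ o x ii, (¬ ∃ y, w y = x) →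
        0 ≤ diagCp Cp (m + 1) (Fin.snoc w x) p (qq o x ii) := fun o x ii hx =>
      (ih (m + 1) (by omega) _ (hinj x hx) p _).1
    have hnn' : ∀ o x, 0 ≤ (if ∃ y, w y = x then 0 else
        ∑ ii : Fin d, diagCp Cp (m + 1) (Fin.snoc w x) p (qq o x ii)) := by
      intro o x
      split_ifs with hx
      · exact le_refl _
      · exact Finset.sum_nonneg fun ii _ => hnn o x ii hx
    refine ⟨?_, ?_, ?_⟩
    · rw [← hs (q (w (Fin.last m))).1]
      exact Finset.sum_nonneg fun x _ => hnn' _ x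
    · intro h0 r hr q' hq1 hq2 f
      set x := r ⟨m + 1, by omega⟩ with hxdef
      have hx : ¬ ∃ y, w y = x := by
        rintro ⟨y, hy⟩
        rw [← hr y, hxdef] at hy
        have := congrArg Fin.val (r.injective hy)
        simp at this
        omega
      rw [← hs (q' (w (Fin.last m))).2,
        Finset.sum_eq_zero_iff_of_nonneg (fun x _ => hnn' _ x)] at h0
      have h1 := h0 x (Finset.mem_univ _)
      rw [if_neg hx, Finset.sum_eq_zero_iff_of_nonneg (fun ii _ => hnn _ x ii hx)] at h1
      have h2 := h1 (q' x).1 (Finset.mem_univ _)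
      refine (ih (m + 1) (by omega) _ (hinj x hx) p _).2.1 h2 r ?_ q' ?_ ?_ f
      · intro s
        refine Fin.lastCases ?_ (fun s => ?_) s
        · rw [Fin.snoc_last]; rfl
        · rw [Fin.snoc_castSucc, ← hr s]; rfl
      · intro s
        rw [Fin.snoc_castSucc]
        refine Fin.lastCases ?_ (fun s => ?_) s
        · rw [hql _ _ _ hx, ← hq2]
        · rw [hqc _ _ _ hx, hq1]
      · rw [Fin.snoc_last, hqx]
    · intro h0
      rw [← hs (q (w (Fin.last m))).2]
      refine Finset.sum_eq_zero fun x _ => ?_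
      split_ifs with hx
      · rfl
      · refine Finset.sum_eq_zero fun ii _ => ?_
        refine (ih (m + 1) (by omega) _ (hinj x hx) p _).2.2 ?_
        intro r hr q' hq' f
        refine h0 r (fun s => ?_) q' (fun s => ?_) f
        · have := hr s.castSucc
          rw [Fin.snoc_castSucc] at this
          exact this
        · have := hq' s.castSucc
          rw [Fin.snoc_castSucc] at this
          rw [this]
          refine Fin.lastCases ?_ (fun s => ?_) s
          · rw [hql _ _ _ hx]
          · rw [hqc _ _ _ hx]

/-! ### Elimination of all slots -/

/-- if `max(M, N) ≤ max(2, d − 1)` and the family `{C_{P r F}}` satisfies the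
QC-CC conditions, then it is impossible that every `C_{P r F}` decomposes as
`Σ_a |C_r^{(a)}⟩⟨C_r^{(a)}|` with each
`|C_r^{(a)}⟩ = Σ_{i,k} |S_SWITCH⟩^{I_i O_i I′_k O′_k P F} ⊗ |ξ^{(a),r}_{ik}⟩`. -/
theorem stmt_5 (d M N : ℕ) (hd : 2 ≤ d) (hM : 1 ≤ M) (hN : 1 ≤ N)
    (hbound : max M N ≤ max 2 (d - 1))
    (Cfam : Equiv.Perm (Fin (M + N)) →
      Matrix (FullQ d (M + N)) (FullQ d (M + N)) ℂ)
    (hqccc : IsQCCC d (M + N) Cfam) :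
    ¬ (∀ r : Equiv.Perm (Fin (M + N)),
      ∃ (mA : ℕ)
        (ξ : Fin mA → (i : Fin M) → (k : Fin N) →
          (({s : Fin (M + N) // s ≠ Fin.castAdd N i ∧ s ≠ Fin.natAdd M k} → DD d) → ℂ)),
        Cfam r = ∑ a, Matrix.vecMulVec (decompVec d M N (ξ a))
          (star (decompVec d M N (ξ a)))) := by
  intro hdec
  choose mA ξ hC using hdec
  obtain ⟨-, Cp, -, hii, -, hiii, hiv⟩ := hqccc
  have hMd : M ≤ d := by omega
  have hNd : N ≤ d := by omega
  have hM2 : M < d ∨ M ≤ 2 := by omega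
  have hN2 : N < d ∨ N ≤ 2 := by omega
  let D : Equiv.Perm (Fin (M + N)) → PFq d → (Fin (M + N) → DD d) → PFq d → ℂ :=
    fun r p q f => Cfam r (p, q, f) (p, q, f)
  have hDeq : ∀ r p q f, D r p q f = ∑ a, decompVec d M N (ξ r a) (p, q, f) *
      star (decompVec d M N (ξ r a) (p, q, f)) := by
    intro r p q f
    simp only [D]
    rw [hC r, Matrix.sum_apply]
    rfl
  have hD : ∀ r p q f, 0 ≤ D r p q f := by
    intro r p q f
    rw [hDeq]
    exact Finset.sum_nonneg fun a _ => mul_star_self_nonneg _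
  have hD0 : ∀ r p q f, D r p q f = 0 ↔ ∀ a, decompVec d M N (ξ r a) (p, q, f) = 0 := by
    intro r p q f
    rw [hDeq, Finset.sum_eq_zero_iff_of_nonneg (fun a _ => mul_star_self_nonneg _)]
    simp
  have hspec := diagCp_spec D hD Cp
    (fun r m h p q => by
      have := hii r m h p p q q
      rw [if_pos rfl, mul_one] at this
      exact this)
    (fun m hm u hu p g iL o => by
      have := hiii m hm u hu p p g g iL iL o o
      rwa [if_pos rfl, mul_one] at this)
  -- only terms whose two slots are among the first `m` letters of `r` contribute
  have main : ∀ n m, m + n = M + N → ∀ r a p q f,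
      decompVec d M N (ξ r a) (p, q, f) = ∑ i : Fin M, ∑ k : Fin N,
        if (r.symm (Fin.castAdd N i) : ℕ) < m ∧ (r.symm (Fin.natAdd M k) : ℕ) < m then
          swVecd p (q (Fin.castAdd N i)) (q (Fin.natAdd M k)) f * ξ r a i k (fun s => q s.1)
        else 0 := by
    intro n
    induction n with
    | zero =>
      intro m hm r a p q f
      refine Finset.sum_congr rfl fun i _ => Finset.sum_congr rfl fun k _ => ?_
      rw [if_pos ⟨by omega, by omega⟩]
    | succ n ih =>
      intro m hm r
      have ih' := ih (m + 1) (by omega)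
      have hmK : m < M + N := by omega
      let w : Fin (m + 1) → Fin (M + N) := fun s => r (Fin.castLE (by omega) s)
      have hw : Function.Injective w := fun s t h => by
        have := r.injective h
        simpa using this
      have hwl : w (Fin.last m) = r ⟨m, hmK⟩ := rfl
      have hwr : ∀ s, (r.symm s : ℕ) < m + 1 → ∃ y, w y = s := fun s hs =>
        ⟨⟨r.symm s, hs⟩, by simp [w]⟩
      -- permutations extending `w` have the same first `m + 1` slots as `r`
      have hext : ∀ r' : Equiv.Perm (Fin (M + N)),
          (∀ s : Fin (m + 1), r' (Fin.castLE (by omega) s) = w s) →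
          ∀ s, (r'.symm s : ℕ) < m + 1 ↔ (r.symm s : ℕ) < m + 1 := by
        intro r' hr' s
        constructor
        · intro h
          have h1 := hr' ⟨r'.symm s, h⟩
          have h2 : r' (r'.symm s) = r (r'.symm s) := h1
          rw [Equiv.apply_symm_apply] at h2
          have h3 : r.symm s = r'.symm s := by rw [Equiv.symm_apply_eq]; exact h2
          rw [h3]; exact h
        · intro h
          have h1 := hr' ⟨r.symm s, h⟩
          have h2 : r' (r.symm s) = r (r.symm s) := h1
          rw [Equiv.apply_symm_apply] at h2
          have h3 : r'.symm s = r.symm s := by rw [Equiv.symm_apply_eq]; exact h2.symm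
          rw [h3]; exact h
      let ι := Σ r' : {r' : Equiv.Perm (Fin (M + N)) //
        ∀ s : Fin (m + 1), r' (Fin.castLE (by omega) s) = w s}, Fin (mA r'.1)
      let V : ι → PFq d → (Fin (M + N) → DD d) → PFq d → ℂ :=
        fun j p q f => decompVec d M N (ξ j.1.1 j.2) (p, q, f)
      have hV : ∀ j p q f, V j p q f = ∑ i : Fin M, ∑ k : Fin N,
          if (r.symm (Fin.castAdd N i) : ℕ) < m + 1 ∧ (r.symm (Fin.natAdd M k) : ℕ) < m + 1 then
            swVecd p (q (Fin.castAdd N i)) (q (Fin.natAdd M k)) f *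
              ξ j.1.1 j.2 i k (fun s => q s.1)
          else 0 := by
        intro j p q f
        simp only [V]
        rw [ih']
        simp only [hext j.1.1 j.1.2]
      have hcaus : ∀ p q,
          (∀ j q' f, (∀ s, (r.symm s : ℕ) < m + 1 → q' s = q s) → V j p q' f = 0) →
          ∀ j x f, V j p (Function.update q (r ⟨m, hmK⟩) ((q (r ⟨m, hmK⟩)).1, x)) f = 0 := by
        intro p q h j x f
        obtain ⟨-, h1, h2⟩ := hspec n m (by omega) w hw p q
        refine (hD0 _ _ _ _).1 (h1 (h2 fun r' hr' q' hq' f => (hD0 _ _ _ _).2 fun a =>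
          h ⟨⟨r', hr'⟩, a⟩ q' f fun s hs => ?_) j.1.1 j.1.2 _ (fun s => ?_) ?_ f) j.2
        · obtain ⟨y, rfl⟩ := hwr s hs
          exact hq' y
        · rw [← hwl]
          exact Function.update_of_ne (fun e => (Fin.castSucc_lt_last s).ne (hw e)) _ _
        · rw [hwl, Function.update_self]
      have hpos : ∀ s, s ≠ r ⟨m, hmK⟩ → ((r.symm s : ℕ) < m + 1 ↔ (r.symm s : ℕ) < m) := by
        intro s hs
        have : (r.symm s : ℕ) ≠ m := fun e => hs (by
          rw [← Equiv.symm_apply_eq]; exact Fin.ext e)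
        omega
      have hlast : (r.symm (r ⟨m, hmK⟩) : ℕ) = m := by simp
      have hAinj : Function.Injective (Fin.castAdd N : Fin M → Fin (M + N)) :=
        Fin.castAdd_injective M N
      have hBinj : Function.Injective (Fin.natAdd M : Fin N → Fin (M + N)) :=
        Fin.natAdd_injective N M
      have hABne : ∀ (i : Fin M) (k : Fin N), Fin.castAdd N i ≠ Fin.natAdd M k := by
        intro i k h
        have := congrArg Fin.val h
        simp at this
        omega
      have hξ : ∀ (j : ι) i k (q q' : Fin (M + N) → DD d),
          (∀ s, s ≠ Fin.castAdd N i → s ≠ Fin.natAdd M k → q s = q' s) →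
          ξ j.1.1 j.2 i k (fun s => q s.1) = ξ j.1.1 j.2 i k (fun s => q' s.1) := by
        intro j i k q q' h
        congr 1
        funext s
        exact h s.1 s.2.1 s.2.2
      intro a p q f
      rw [ih']
      obtain ⟨i0, hi0⟩ | ⟨k0, hk0⟩ : (∃ i0, r ⟨m, hmK⟩ = Fin.castAdd N i0) ∨
          ∃ k0, r ⟨m, hmK⟩ = Fin.natAdd M k0 := by
        refine Fin.addCases (fun i => ?_) (fun k => ?_) (r ⟨m, hmK⟩)
        · exact Or.inl ⟨i, rfl⟩
        · exact Or.inr ⟨k, rfl⟩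
      · rw [hi0] at hcaus hpos hlast
        have key := last_slot_unused hd 0 1 (by decide) (Fin.castAdd N) (Fin.natAdd M)
          hAinj hBinj hABne (fun s => (r.symm s : ℕ) < m + 1)
          (fun (j : ι) i k q => ξ j.1.1 j.2 i k (fun s => q s.1)) hξ V
          hV i0 (by omega) hcaus (by simpa using hMd) (by simpa using hN2)
          ⟨⟨r, fun s => rfl⟩, a⟩ p q f
        refine Finset.sum_congr rfl fun i _ => ?_
        by_cases h : i = i0
        · subst h
          rw [hlast]
          simp only [lt_irrefl, false_and, if_false, Finset.sum_const_zero, Nat.lt_succ_self,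
            true_and]
          exact key
        · refine Finset.sum_congr rfl fun k _ => ?_
          simp only [hpos _ (fun e => h (hAinj e)), hpos _ (hABne i0 k).symm]
      · rw [hk0] at hcaus hpos hlast
        have key := last_slot_unused hd 1 0 (by decide) (Fin.natAdd M) (Fin.castAdd N)
          hBinj hAinj (fun k i => (hABne i k).symm) (fun s => (r.symm s : ℕ) < m + 1)
          (fun (j : ι) k i q => ξ j.1.1 j.2 i k (fun s => q s.1))
          (fun j k i q q' h => hξ j i k q q' fun s h1 h2 => h s h2 h1) V
          (fun j p q f => by
            rw [hV, Finset.sum_comm]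
            simp only [swVecd_eq_swc_swap, and_comm])
          k0 (by omega) hcaus (by simpa using hNd) (by simpa using hM2)
          ⟨⟨r, fun s => rfl⟩, a⟩ p q f
        rw [Finset.sum_comm]
        conv_rhs => rw [Finset.sum_comm]
        refine Finset.sum_congr rfl fun k _ => ?_
        by_cases h : k = k0
        · subst h
          rw [hlast]
          simp only [lt_irrefl, and_false, if_false, Finset.sum_const_zero, Nat.lt_succ_self,
            and_true, swVecd_eq_swc_swap]
          exact key
        · refine Finset.sum_congr rfl fun i _ => ?_
          simp only [hpos _ (fun e => h (hBinj e)), hpos _ (hABne i k0)]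
  have hzero : ∀ r p q f, D r p q f = 0 := by
    intro r p q f
    rw [hD0]
    intro a
    rw [main (M + N) 0 (by omega)]
    simp
  have h0 : (0 : ℕ) < d := by omega
  have h4 := hiv (0, ⟨0, h0⟩) (0, ⟨0, h0⟩)
  rw [if_pos rfl] at h4
  refine zero_ne_one (α := ℂ) (Eq.trans ?_ h4)
  symm
  refine Finset.sum_eq_zero fun x _ => Finset.sum_eq_zero fun ii _ => ?_
  have h5 := (hspec (M + N - 1) 0 (by omega) (fun _ => x)
    (fun s t _ => Fin.ext (by omega)) (0, ⟨0, h0⟩) (fun _ => (ii, ii))).2.2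
    (fun r _ q' _ f => hzero r _ q' f)
  rw [← h5]
  unfold diagCp
  congr 3 <;> exact Subsingleton.elim _ _
end
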